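/- arXiv:1412.6081 — 3 statements merged into one kernel-verified Lean document; each statement's English description precedes it below -/
import Mathlib

section
/- Let N ≥ 1, let κ, η ∈ ℂ∖{0}, let μ₁, …, μ_N be pairwise distinct complex numbers and ν₁, …, ν_N be pairwise distinct complex numbers such that κη⁻¹μ_i ≠ κ⁻¹ν_j for all i, j. For I ⊆ {1,…,N} define c_I(μ) := ∏_{i∈I, j∈{1,…,N}∖I} (κη⁻¹μ_i − ηκ⁻¹μ_j)/(μ_i − μ_j), Π_I(μ,ν) := ∏_{i∈I} ∏_{j=1}^{N} (μ_i − η⁻¹ν_j)/(κη⁻¹μ_i − κ⁻¹ν_j), c̄_I(ν) := ∏_{i∈I, j∈{1,…,N}∖I} (κη⁻¹ν_j − ηκ⁻¹ν_i)/(ν_j − ν_i), and Π̄_I(μ,ν) := ∏_{i∈I} ∏_{j=1}^{N} (μ_j − η⁻¹ν_i)/(κη⁻¹μ_j − κ⁻¹ν_i). Then for every 0 ≤ r ≤ N: Σ_{I ⊆ {1,…,N}, |I| = r} c_I(μ)·Π_I(μ,ν) = Σ_{I ⊆ {1,…,N}, |I| = r} c̄_I(ν)·Π̄_I(μ,ν).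 -/
/-!
Put `t = κ / η`, `s = t²`, `x = μ`, `y = ν / η`. Up to powers of `t`, which agree on the two sides,
the claim times `∏_{i,j} (s x_i - y_j)` is an equality of homogeneous components of two sums
over subsets,
`∑_I ∏_{i ∈ I, j ∉ I} (s x_i - x_j) / (x_i - x_j) ∏_{i ∈ I, j} u (x_i - y_j) ∏_{i ∉ I, j} v (s x_i - y_j)`
on the left (with one factor `u` or `v` for each `i`) and its `y`-counterpart on the right. These
are `Bifund.L` and `Bifund.R`, and `Bifund.L_eq_R` proves them equal by induction on the number of
variables.

For the inductive step, regard `L - R` as a function of one variable `x_a`, the other `x_i` being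
fixed. When `x_a = y_b`, only subsets avoiding `a` (on the left) or `b` (on the right) contribute;
when `s x_a = y_b`, only those containing them do. In both cases the two sides become the same
multiple of the two sides of the identity without `x_a` and `y_b` (`reduce_of_eq`,
`reduce_of_mul_eq`; in the second case `v` is replaced by `v s`). With `N` variables,
`(L - R) ∏_{i ≠ a} (x_a - x_i)` is a polynomial in `x_a` of degree at most `2 N - 1`
(`exists_poly`), and the `2 N` points `y_b`, `y_b / s` are zeros of it, so it vanishes as soon as
these points are distinct and differ from the other `x_i` (`step_generic`). The remaining
parameters follow by continuity along the deformation `s + e`, `y_j + e²` (`step`).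
-/

open Finset Polynomial Filter Topology

namespace Bifund

/-! ### Weighted sums over subsets -/

/-- The sum over subsets `I ⊆ S` of
`∏_{i ∈ I, j ∈ S \ I} c i j · ∏_{i ∈ I} f i · ∏_{j ∈ S \ I} g j`. -/
def E {ι R : Type*} [DecidableEq ι] [CommRing R] (c : ι → ι → R) (f g : ι → R)
    (S : Finset ι) : R :=
  ∑ I ∈ S.powerset, (∏ i ∈ I, ∏ j ∈ S \ I, c i j) * (∏ i ∈ I, f i) * ∏ j ∈ S \ I, g j

section E

variable {ι R : Type*} [DecidableEq ι] [CommRing R]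

lemma E_empty (c : ι → ι → R) (f g : ι → R) : E c f g ∅ = 1 := by
  simp [E]

/-- Splitting the sum according to whether `a ∈ I`. -/
lemma E_insert (c : ι → ι → R) (f g : ι → R) {a : ι} {S : Finset ι} (ha : a ∉ S) :
    E c f g (insert a S) =
      g a * E c (fun i => f i * c i a) g S + f a * E c f (fun j => g j * c a j) S := by
  unfold E
  rw [Finset.sum_powerset_insert ha, Finset.mul_sum, Finset.mul_sum]
  congr 1
  · refine Finset.sum_congr rfl fun I hI => ?_
    have hI' := Finset.mem_powerset.1 hI
    have haI : a ∉ I := fun h => ha (hI' h)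
    have h1 : insert a S \ I = insert a (S \ I) := Finset.insert_sdiff_of_notMem _ haI
    have h2 : a ∉ S \ I := fun h => ha (Finset.mem_sdiff.1 h).1
    simp only [h1, Finset.prod_insert h2, Finset.prod_mul_distrib]
    ring
  · refine Finset.sum_congr rfl fun I hI => ?_
    have hI' := Finset.mem_powerset.1 hI
    have haI : a ∉ I := fun h => ha (hI' h)
    have h1 : insert a S \ insert a I = S \ I := by
      ext k
      simp only [Finset.mem_sdiff, Finset.mem_insert]
      constructor
      · tauto
      · rintro ⟨h, h'⟩
        refine ⟨Or.inr h, ?_⟩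
        rintro (rfl | h'')
        · exact ha h
        · exact h' h''
    simp only [h1, Finset.prod_insert haI, Finset.prod_mul_distrib]
    ring

lemma E_congr {c c' : ι → ι → R} {f f' g g' : ι → R} {S : Finset ι}
    (hc : ∀ i ∈ S, ∀ j ∈ S, i ≠ j → c i j = c' i j)
    (hf : ∀ i ∈ S, f i = f' i) (hg : ∀ i ∈ S, g i = g' i) : E c f g S = E c' f' g' S := by
  unfold E
  refine Finset.sum_congr rfl fun I hI => ?_
  have hI' := Finset.mem_powerset.1 hI
  congr 1
  · congr 1
    · refine Finset.prod_congr rfl fun i hi => Finset.prod_congr rfl fun j hj => ?_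
      obtain ⟨hj1, hj2⟩ := Finset.mem_sdiff.1 hj
      exact hc i (hI' hi) j hj1 (fun h => hj2 (h ▸ hi))
    · exact Finset.prod_congr rfl fun i hi => hf i (hI' hi)
  · exact Finset.prod_congr rfl fun i hi => hg i (Finset.mem_sdiff.1 hi).1

lemma E_scale (c : ι → ι → R) (f g d : ι → R) (S : Finset ι) :
    E c (fun i => f i * d i) (fun i => g i * d i) S = (∏ i ∈ S, d i) * E c f g S := by
  unfold E
  rw [Finset.mul_sum]
  refine Finset.sum_congr rfl fun I hI => ?_
  rw [← Finset.prod_sdiff (Finset.mem_powerset.1 hI)]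
  simp only [Finset.prod_mul_distrib]
  ring

lemma E_map {R' : Type*} [CommRing R'] (φ : R →+* R') (c : ι → ι → R) (f g : ι → R)
    (S : Finset ι) :
    φ (E c f g S) = E (fun i j => φ (c i j)) (fun i => φ (f i)) (fun i => φ (g i)) S := by
  simp [E, map_sum, map_prod]

lemma E_natDegree_le (c : ι → ι → R) (f g : ι → R[X]) (S : Finset ι)
    (hf : ∀ i ∈ S, (f i).natDegree ≤ 1) (hg : ∀ i ∈ S, (g i).natDegree ≤ 1) :
    (E (fun i j => C (c i j)) f g S).natDegree ≤ S.card := by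
  unfold E
  refine Polynomial.natDegree_sum_le_of_forall_le _ _ fun I hI => ?_
  have hI' := Finset.mem_powerset.1 hI
  have h1 : (∏ i ∈ I, f i).natDegree ≤ I.card := by
    refine (Polynomial.natDegree_prod_le _ _).trans ?_
    refine (Finset.sum_le_card_nsmul _ _ 1 fun i hi => hf i (hI' hi)).trans ?_
    simp
  have h2 : (∏ i ∈ S \ I, g i).natDegree ≤ (S \ I).card := by
    refine (Polynomial.natDegree_prod_le _ _).trans ?_
    refine (Finset.sum_le_card_nsmul _ _ 1 fun i hi => hg i (Finset.mem_sdiff.1 hi).1).trans ?_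
    simp
  have h3 : (∏ i ∈ I, ∏ j ∈ S \ I, C (c i j) : R[X]).natDegree = 0 := by
    simp only [← map_prod, natDegree_C]
  have h4 : (S \ I).card + I.card = S.card := Finset.card_sdiff_add_card_eq_card hI'
  have h5 : ((∏ i ∈ I, ∏ j ∈ S \ I, C (c i j)) * ∏ i ∈ I, f i).natDegree ≤ I.card :=
    natDegree_mul_le.trans (by rw [h3]; omega)
  exact (natDegree_mul_le_of_le h5 h2).trans (by omega)

lemma coeff_E (c : ι → ι → R) (f g : ι → R) (S : Finset ι) (r : ℕ) :
    (E (fun i j => C (c i j)) (fun i => X * C (f i)) (fun i => C (g i)) S).coeff r =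
      ∑ I ∈ S.powersetCard r,
        (∏ i ∈ I, ∏ j ∈ S \ I, c i j) * (∏ i ∈ I, f i) * ∏ j ∈ S \ I, g j := by
  have h : ∀ I : Finset ι, (∏ i ∈ I, ∏ j ∈ S \ I, C (c i j)) * (∏ i ∈ I, X * C (f i)) *
      ∏ j ∈ S \ I, C (g j) =
      C ((∏ i ∈ I, ∏ j ∈ S \ I, c i j) * (∏ i ∈ I, f i) * ∏ j ∈ S \ I, g j) * X ^ I.card := by
    intro I
    simp only [Finset.prod_mul_distrib, Finset.prod_const, map_mul, map_prod]
    ring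
  unfold E
  simp only [h, finsetSum_coeff, coeff_C_mul_X_pow, Finset.powersetCard_eq_filter,
    Finset.sum_filter, eq_comm]

/-- Putting a weight `u` on `f` turns `E` into the generating function of its homogeneous
components, which are therefore determined by its values. -/
lemma component_eq {ι' : Type*} [DecidableEq ι'] {c : ι → ι → ℂ} {f g : ι → ℂ} {S : Finset ι}
    {c' : ι' → ι' → ℂ} {f' g' : ι' → ℂ} {T : Finset ι'}
    (h : ∀ u : ℂ, E c (fun i => u * f i) g S = E c' (fun i => u * f' i) g' T) (r : ℕ) :
    ∑ I ∈ S.powersetCard r,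
        (∏ i ∈ I, ∏ j ∈ S \ I, c i j) * (∏ i ∈ I, f i) * ∏ j ∈ S \ I, g j =
      ∑ I ∈ T.powersetCard r,
        (∏ i ∈ I, ∏ j ∈ T \ I, c' i j) * (∏ i ∈ I, f' i) * ∏ j ∈ T \ I, g' j := by
  have hp : E (fun i j => C (c i j)) (fun i => X * C (f i)) (fun i => C (g i)) S =
      E (fun i j => C (c' i j)) (fun i => X * C (f' i)) (fun i => C (g' i)) T := by
    refine Polynomial.funext fun u => ?_
    have h1 := E_map (evalRingHom u) (fun i j => C (c i j)) (fun i => X * C (f i))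
      (fun i => C (g i)) S
    have h2 := E_map (evalRingHom u) (fun i j => C (c' i j)) (fun i => X * C (f' i))
      (fun i => C (g' i)) T
    simp only [coe_evalRingHom, eval_C, eval_mul, eval_X] at h1 h2
    rw [h1, h2, h u]
  rw [← coeff_E, ← coeff_E, hp]

end E

/-! ### The two sides and their reductions -/

/-- The `x`-side generating function, with denominators `s x_i - y_j` cleared and with weight
`u` for the elements of the subset and `v` for the others. -/
noncomputable def L {ι ι' : Type*} [DecidableEq ι] (s u v : ℂ) (x : ι → ℂ) (y : ι' → ℂ)
    (S : Finset ι) (T : Finset ι') : ℂ :=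
  E (fun i j => (s * x i - x j) / (x i - x j)) (fun i => u * ∏ j ∈ T, (x i - y j))
    (fun i => v * ∏ j ∈ T, (s * x i - y j)) S

/-- The `y`-side generating function, with the same denominators cleared and the same weights. -/
noncomputable def R {ι ι' : Type*} [DecidableEq ι'] (s u v : ℂ) (x : ι → ℂ) (y : ι' → ℂ)
    (S : Finset ι) (T : Finset ι') : ℂ :=
  E (fun i j => (s * y j - y i) / (y j - y i)) (fun i => u * ∏ j ∈ S, (x j - y i))
    (fun i => v * ∏ j ∈ S, (s * x j - y i)) T

section

variable {ι ι' : Type*} [DecidableEq ι'] [DecidableEq ι]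

/-- At `x_a = y_b` only subsets avoiding `a` (resp. `b`) contribute, and both sides reduce by the
same factor to the identity with `a` and `b` removed. -/
lemma reduce_of_eq {s u v : ℂ} {x : ι → ℂ} {y : ι' → ℂ} {S : Finset ι} {T : Finset ι'} {a : ι}
    {b : ι'} (ha : a ∉ S) (hb : b ∉ T) (hab : x a = y b) (hx : ∀ i ∈ S, x i ≠ y b)
    (hy : ∀ j ∈ T, y j ≠ y b) (h : L s u v x y S T = R s u v x y S T) :
    L s u v x y (insert a S) (insert b T) = R s u v x y (insert a S) (insert b T) := by
  have hL : L s u v x y (insert a S) (insert b T) =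
      v * (∏ j ∈ insert b T, (s * x a - y j)) *
        ((∏ i ∈ S, (s * x i - y b)) * L s u v x y S T) := by
    unfold L
    rw [E_insert _ _ _ ha, ← E_scale]
    simp only [Finset.prod_insert hb, hab, sub_self, zero_mul, mul_zero, add_zero]
    congr 1
    refine E_congr (fun _ _ _ _ _ => rfl) (fun i hi => ?_) (fun i hi => by ring)
    have := sub_ne_zero.2 (hx i hi)
    field_simp
  have hR : R s u v x y (insert a S) (insert b T) =
      v * (∏ j ∈ insert a S, (s * x j - y b)) *
        ((∏ i ∈ T, (s * y b - y i)) * R s u v x y S T) := by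
    unfold R
    rw [E_insert _ _ _ hb, ← E_scale]
    simp only [Finset.prod_insert ha, hab, sub_self, zero_mul, mul_zero, add_zero]
    congr 1
    refine E_congr (fun _ _ _ _ _ => rfl) (fun i hi => ?_) (fun i hi => by ring)
    have := sub_ne_zero.2 (hy i hi).symm
    field_simp
  rw [hL, hR, h, Finset.prod_insert ha, Finset.prod_insert hb, hab]
  ring

/-- At `s x_a = y_b` only subsets containing `a` (resp. `b`) contribute, and both sides reduce by
the same factor to the identity with `a` and `b` removed and the weight `v` replaced by `v s`. -/
lemma reduce_of_mul_eq {s u v : ℂ} {x : ι → ℂ} {y : ι' → ℂ} {S : Finset ι} {T : Finset ι'} {a : ι}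
    {b : ι'} (ha : a ∉ S) (hb : b ∉ T) (hab : s * x a = y b) (hx : ∀ i ∈ S, x i ≠ x a)
    (hy : ∀ j ∈ T, y j ≠ y b)
    (h : L s u (v * s) x y S T = R s u (v * s) x y S T) :
    L s u v x y (insert a S) (insert b T) = R s u v x y (insert a S) (insert b T) := by
  have hL : L s u v x y (insert a S) (insert b T) =
      u * (∏ j ∈ insert b T, (x a - y j)) *
        ((∏ i ∈ S, (x i - y b)) * L s u (v * s) x y S T) := by
    unfold L
    rw [E_insert _ _ _ ha, ← E_scale]
    simp only [Finset.prod_insert hb, hab, sub_self, zero_mul, mul_zero, zero_add]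
    congr 1
    refine E_congr (fun _ _ _ _ _ => rfl) (fun i hi => by ring) (fun i hi => ?_)
    have := sub_ne_zero.2 (hx i hi).symm
    rw [← hab]
    field_simp
    ring
  have hR : R s u v x y (insert a S) (insert b T) =
      u * (∏ j ∈ insert a S, (x j - y b)) *
        ((∏ i ∈ T, (x a - y i)) * R s u (v * s) x y S T) := by
    unfold R
    rw [E_insert _ _ _ hb, ← E_scale]
    simp only [Finset.prod_insert ha, hab, sub_self, zero_mul, mul_zero, zero_add]
    congr 1
    refine E_congr (fun _ _ _ _ _ => rfl) (fun i hi => by ring) (fun i hi => ?_)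
    have := sub_ne_zero.2 (hy i hi)
    field_simp
    rw [← hab]
    ring
  rw [hL, hR, h, Finset.prod_insert ha, Finset.prod_insert hb]
  ring

/-! ### Polynomiality in one variable and the inductive step -/

/-- As a function of `z = x_a`, the difference of the two sides becomes a polynomial of degree at
most `|S| + |T|` once the denominators `z - x_i` are cleared. -/
lemma exists_poly (s u v : ℂ) (x : ι → ℂ) (y : ι' → ℂ) {S : Finset ι} (T : Finset ι') {a : ι}
    (ha : a ∉ S) :
    ∃ p : ℂ[X], p.natDegree ≤ S.card + T.card ∧ ∀ z, (∀ i ∈ S, x i ≠ z) →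
      p.eval z = (∏ i ∈ S, (z - x i)) *
        (L s u v (Function.update x a z) y (insert a S) T -
          R s u v (Function.update x a z) y (insert a S) T) := by
  set c : ι → ι → ℂ := fun i j => (s * x i - x j) / (x i - x j) with hc
  set f : ι → ℂ := fun i => u * ∏ j ∈ T, (x i - y j) with hf
  set g : ι → ℂ := fun i => v * ∏ j ∈ T, (s * x i - y j) with hg
  let p₁ : ℂ[X] := E (fun i j => C (c i j)) (fun i => C (f i) * (X - C (s * x i)))
    (fun i => C (g i) * (X - C (x i))) S
  let p₂ : ℂ[X] := E (fun i j => C (c i j)) (fun i => C (f i) * (X - C (x i)))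
    (fun i => C (g i) * (C s * X - C (x i))) S
  let q : ℂ[X] := E (fun i j => C ((s * y j - y i) / (y j - y i)))
    (fun i => C (u * ∏ j ∈ S, (x j - y i)) * (X - C (y i)))
    (fun i => C (v * ∏ j ∈ S, (s * x j - y i)) * (C s * X - C (y i))) T
  let A : ℂ[X] := C u * ∏ j ∈ T, (X - C (y j))
  let B : ℂ[X] := C v * ∏ j ∈ T, (C s * X - C (y j))
  let D : ℂ[X] := ∏ i ∈ S, (X - C (x i))
  have hlin : ∀ k e t : ℂ, (C k * (C e * X - C t)).natDegree ≤ 1 := by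
    intro k e t; compute_degree
  have hlin' : ∀ k t : ℂ, (C k * (X - C t)).natDegree ≤ 1 := by
    intro k t; compute_degree
  have hp₁ : p₁.natDegree ≤ S.card :=
    E_natDegree_le _ _ _ _ (fun i _ => hlin' _ _) (fun i _ => hlin' _ _)
  have hp₂ : p₂.natDegree ≤ S.card :=
    E_natDegree_le _ _ _ _ (fun i _ => hlin' _ _) (fun i _ => hlin _ _ _)
  have hq : q.natDegree ≤ T.card :=
    E_natDegree_le _ _ _ _ (fun i _ => hlin' _ _) (fun i _ => hlin _ _ _)
  have hprod : ∀ {κ : Type _} (U : Finset κ) (e : ℂ) (t : κ → ℂ),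
      (∏ j ∈ U, (C e * X - C (t j))).natDegree ≤ U.card := by
    intro κ U e t
    refine (Polynomial.natDegree_prod_le _ _).trans ?_
    refine (Finset.sum_le_card_nsmul _ _ 1 fun i hi => ?_).trans (by simp)
    compute_degree
  have hA : A.natDegree ≤ T.card := by
    refine (natDegree_C_mul_le _ _).trans ?_
    simp
  have hB : B.natDegree ≤ T.card := (natDegree_C_mul_le _ _).trans (hprod T s y)
  have hD : D.natDegree ≤ S.card := by simp [D]
  refine ⟨B * p₁ + A * p₂ - D * q, ?_, fun z hz => ?_⟩
  · refine (natDegree_sub_le _ _).trans (max_le ((natDegree_add_le _ _).trans (max_le ?_ ?_)) ?_) <;>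
      refine natDegree_mul_le.trans ?_ <;> omega
  · have hne : ∀ i ∈ S, i ≠ a := fun i hi h => ha (h ▸ hi)
    have hup : ∀ i ∈ S, Function.update x a z i = x i := fun i hi =>
      Function.update_of_ne (hne i hi) _ _
    have e₁ : p₁.eval z = (∏ i ∈ S, (z - x i)) *
        E c (fun i => f i * ((s * x i - z) / (x i - z))) g S := by
      rw [← E_scale, ← coe_evalRingHom, E_map]
      refine E_congr (by simp) (fun i hi => ?_) (by simp)
      have := sub_ne_zero.2 (hz i hi)
      simp
      field_simp
      ring
    have e₂ : p₂.eval z = (∏ i ∈ S, (z - x i)) *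
        E c f (fun i => g i * ((s * z - x i) / (z - x i))) S := by
      rw [← E_scale, ← coe_evalRingHom, E_map]
      refine E_congr (by simp) (by simp) (fun i hi => ?_)
      have := sub_ne_zero.2 (hz i hi).symm
      simp
      field_simp
    have e₃ : q.eval z = R s u v (Function.update x a z) y (insert a S) T := by
      unfold R
      rw [← coe_evalRingHom, E_map]
      refine E_congr (by simp) (fun i hi => ?_) (fun i hi => ?_)
      · have : ∏ j ∈ S, (Function.update x a z j - y i) = ∏ j ∈ S, (x j - y i) :=
          Finset.prod_congr rfl fun j hj => by rw [hup j hj]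
        rw [Finset.prod_insert ha, this]
        simp [-map_mul, -map_prod]
        ring
      · have : ∏ j ∈ S, (s * Function.update x a z j - y i) = ∏ j ∈ S, (s * x j - y i) :=
          Finset.prod_congr rfl fun j hj => by rw [hup j hj]
        rw [Finset.prod_insert ha, this]
        simp [-map_mul, -map_prod]
        ring
    have e₄ : L s u v (Function.update x a z) y (insert a S) T =
        B.eval z * E c (fun i => f i * ((s * x i - z) / (x i - z))) g S +
        A.eval z * E c f (fun i => g i * ((s * z - x i) / (z - x i))) S := by
      unfold L
      rw [E_insert _ _ _ ha]
      congr 1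
      · congr 1
        · simp [B, eval_prod]
        · refine E_congr (fun i hi j hj _ => ?_) (fun i hi => ?_) (fun i hi => ?_) <;>
            simp [*]
      · congr 1
        · simp [A, eval_prod]
        · refine E_congr (fun i hi j hj _ => ?_) (fun i hi => ?_) (fun i hi => ?_) <;>
            simp [*]
    rw [eval_sub, eval_add, eval_mul (p := B), eval_mul (p := A), eval_mul (p := D), e₁, e₂, e₃, e₄]
    simp only [D, eval_prod, eval_sub, eval_X, eval_C]
    ring

/-- The inductive step for generic parameters: the polynomial of `exists_poly` has degree at most
`2 |T| - 1` and vanishes at the `2 |T|` points `y_b` and `y_b / s`. -/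
lemma step_generic {s u v : ℂ} {x : ι → ℂ} {y : ι' → ℂ} {S : Finset ι} {T : Finset ι'} {a : ι}
    (ha : a ∉ S) (hcard : T.card = S.card + 1) (hy : Set.InjOn y T)
    (hxa : ∀ i ∈ S, x i ≠ x a)
    (IH : ∀ b ∈ T, ∀ v', L s u v' x y S (T.erase b) = R s u v' x y S (T.erase b))
    (hs : s ≠ 0) (h1 : ∀ j ∈ T, ∀ k ∈ T, s * y k ≠ y j) (h2 : ∀ i ∈ S, ∀ j ∈ T, x i ≠ y j)
    (h3 : ∀ i ∈ S, ∀ j ∈ T, s * x i ≠ y j) :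
    L s u v x y (insert a S) T = R s u v x y (insert a S) T := by
  obtain ⟨p, hdeg, hp⟩ := exists_poly s u v x y T ha
  have hupL : ∀ z v' (T' : Finset ι'), L s u v' (Function.update x a z) y S T' =
      L s u v' x y S T' := by
    intro z v' T'
    have hup : ∀ i ∈ S, Function.update x a z i = x i := fun i hi =>
      Function.update_of_ne (fun h : i = a => ha (h ▸ hi)) _ _
    refine E_congr (fun i hi j hj _ => ?_) (fun i hi => ?_) (fun i hi => ?_) <;> simp [*]
  have hupR : ∀ z v' (T' : Finset ι'), R s u v' (Function.update x a z) y S T' =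
      R s u v' x y S T' := by
    intro z v' T'
    have hup : ∀ i ∈ S, Function.update x a z i = x i := fun i hi =>
      Function.update_of_ne (fun h : i = a => ha (h ▸ hi)) _ _
    refine E_congr (fun i hi j hj _ => rfl) (fun i hi => ?_) (fun i hi => ?_) <;>
      exact congrArg _ (Finset.prod_congr rfl fun j hj => by rw [hup j hj])
  have hup : ∀ z, ∀ i ∈ S, Function.update x a z i = x i := fun z i hi =>
    Function.update_of_ne (fun h : i = a => ha (h ▸ hi)) _ _
  have hyb : ∀ b ∈ T, ∀ j ∈ T.erase b, y j ≠ y b := fun b hb j hj h =>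
    (Finset.mem_erase.1 hj).1 (hy (Finset.mem_erase.1 hj).2 hb h)
  have hp0 : p = 0 := by
    refine Polynomial.eq_zero_of_natDegree_lt_card_of_eval_eq_zero' p
      (T.image y ∪ T.image (fun j => y j / s)) ?_ ?_
    · intro z hz
      rcases Finset.mem_union.1 hz with hz | hz
      · obtain ⟨b, hb, rfl⟩ := Finset.mem_image.1 hz
        rw [hp _ fun i hi => h2 i hi b hb]
        have := reduce_of_eq (s := s) (u := u) (v := v) (x := Function.update x a (y b)) (y := y)
          (S := S) (T := T.erase b) (a := a) (b := b) ha (Finset.notMem_erase b T) (by simp)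
          (fun i hi => by rw [hup _ i hi]; exact h2 i hi b hb) (hyb b hb)
          (by rw [hupL, hupR, IH b hb])
        rw [Finset.insert_erase hb] at this
        rw [this, sub_self, mul_zero]
      · obtain ⟨b, hb, rfl⟩ := Finset.mem_image.1 hz
        have hne : ∀ i ∈ S, x i ≠ y b / s := fun i hi h =>
          h3 i hi b hb (by rw [h]; field_simp)
        rw [hp _ hne]
        have := reduce_of_mul_eq (s := s) (u := u) (v := v) (x := Function.update x a (y b / s))
          (y := y) (S := S) (T := T.erase b) (a := a) (b := b) ha (Finset.notMem_erase b T)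
          (by simp; field_simp)
          (fun i hi => by rw [hup _ i hi]; simpa using hne i hi) (hyb b hb)
          (by rw [hupL, hupR, IH b hb])
        rw [Finset.insert_erase hb] at this
        rw [this, sub_self, mul_zero]
    · rw [Finset.card_union_of_disjoint, Finset.card_image_of_injOn hy,
        Finset.card_image_of_injOn]
      · omega
      · intro j hj k hk h
        exact hy hj hk (by simpa [div_left_inj' hs] using h)
      · rw [Finset.disjoint_left]
        intro z hz hz'
        obtain ⟨k, hk, rfl⟩ := Finset.mem_image.1 hz
        obtain ⟨j, hj, hjk⟩ := Finset.mem_image.1 hz'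
        exact h1 j hj k hk (by rw [← hjk]; field_simp)
  have := hp (x a) hxa
  rw [hp0, eval_zero, Function.update_eq_self] at this
  rcases mul_eq_zero.1 this.symm with h | h
  · obtain ⟨i, hi, h⟩ := Finset.prod_eq_zero_iff.1 h
    exact absurd (sub_eq_zero.1 h).symm (hxa i hi)
  · exact sub_eq_zero.1 h

lemma eventually_eval_ne {p : ℂ[X]} (hp : p.Monic) : ∀ᶠ e in 𝓝[≠] (0 : ℂ), p.eval e ≠ 0 := by
  have h : ({e | p.IsRoot e} \ {0} : Set ℂ).Finite :=
    (Polynomial.finite_setOfPred_isRoot hp.ne_zero).subset Set.sdiff_subset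
  rw [eventually_nhdsWithin_iff]
  filter_upwards [h.isClosed.isOpen_compl.mem_nhds (by simp)] with e he hne hroot
  exact he ⟨hroot, hne⟩

/-- The inductive step without genericity, by continuity: the deformation `s + e`, `y_j + e²`
satisfies the genericity conditions for all small `e ≠ 0`. -/
lemma step {s u v : ℂ} {x : ι → ℂ} {y : ι' → ℂ} {S : Finset ι} {T : Finset ι'} {a : ι}
    (ha : a ∉ S) (hcard : T.card = S.card + 1) (hy : Set.InjOn y T)
    (hx : Set.InjOn x (insert a S : Finset ι))
    (IH : ∀ b ∈ T, ∀ s v' (y' : ι' → ℂ), Set.InjOn y' T →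
      L s u v' x y' S (T.erase b) = R s u v' x y' S (T.erase b)) :
    L s u v x y (insert a S) T = R s u v x y (insert a S) T := by
  have hxa : ∀ i ∈ S, x i ≠ x a := fun i hi h =>
    ha (hx (Finset.mem_insert_of_mem hi) (Finset.mem_insert_self _ _) h ▸ hi)
  have hev : ∀ᶠ e in 𝓝[≠] (0 : ℂ),
      L (s + e) u v x (fun j => y j + e ^ 2) (insert a S) T =
        R (s + e) u v x (fun j => y j + e ^ 2) (insert a S) T := by
    have g0 : ∀ᶠ e in 𝓝[≠] (0 : ℂ), s + e ≠ 0 := by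
      have := eventually_eval_ne (p := X + C s) (monic_X_add_C s)
      filter_upwards [this] with e he h
      exact he (by simp [← h, add_comm])
    have g1 : ∀ᶠ e in 𝓝[≠] (0 : ℂ), ∀ j ∈ T, ∀ k ∈ T,
        (s + e) * (y k + e ^ 2) ≠ y j + e ^ 2 := by
      refine (Filter.eventually_all_finset T).2 fun j _ =>
        (Filter.eventually_all_finset T).2 fun k _ => ?_
      have := eventually_eval_ne (p := X ^ 3 + C (s - 1) * X ^ 2 + C (y k) * X + C (s * y k - y j))
        (by monicity!)
      filter_upwards [this] with e he h
      exact he (by simp; linear_combination h)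
    have g2 : ∀ᶠ e in 𝓝[≠] (0 : ℂ), ∀ i ∈ S, ∀ j ∈ T, x i ≠ y j + e ^ 2 := by
      refine (Filter.eventually_all_finset S).2 fun i _ =>
        (Filter.eventually_all_finset T).2 fun j _ => ?_
      have := eventually_eval_ne (p := X ^ 2 + C (y j - x i)) (by monicity!)
      filter_upwards [this] with e he h
      exact he (by simp; linear_combination -h)
    have g3 : ∀ᶠ e in 𝓝[≠] (0 : ℂ), ∀ i ∈ S, ∀ j ∈ T, (s + e) * x i ≠ y j + e ^ 2 := by
      refine (Filter.eventually_all_finset S).2 fun i _ =>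
        (Filter.eventually_all_finset T).2 fun j _ => ?_
      have := eventually_eval_ne (p := X ^ 2 + C (- x i) * X + C (y j - s * x i)) (by monicity!)
      filter_upwards [this] with e he h
      exact he (by simp; linear_combination -h)
    filter_upwards [g0, g1, g2, g3] with e h0 h1 h2 h3
    have hy' : Set.InjOn (fun j => y j + e ^ 2) T := fun j hj k hk h => hy hj hk (by simpa using h)
    exact step_generic ha hcard hy' hxa (fun b hb v' => IH b hb _ _ _ hy') h0 h1 h2 h3
  have cL : Continuous fun e : ℂ => L (s + e) u v x (fun j => y j + e ^ 2) (insert a S) T := by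
    unfold L E
    fun_prop
  have cR : Continuous fun e : ℂ => R (s + e) u v x (fun j => y j + e ^ 2) (insert a S) T := by
    unfold R E
    simp only [add_sub_add_right_eq_sub]
    fun_prop
  have tL := (cL.tendsto 0).mono_left (nhdsWithin_le_nhds (s := {0}ᶜ))
  have tR := (cR.tendsto 0).mono_left (nhdsWithin_le_nhds (s := {0}ᶜ))
  have := tendsto_nhds_unique_of_eventuallyEq tL tR hev
  simpa using this

/-- The identity for the generating functions, with no condition relating `s`, `x` and `y`. -/
theorem L_eq_R (n : ℕ) : ∀ (s u v : ℂ) (x : ι → ℂ) (y : ι' → ℂ) (S : Finset ι) (T : Finset ι'),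
    S.card = n → T.card = n → Set.InjOn x S → Set.InjOn y T →
    L s u v x y S T = R s u v x y S T := by
  induction n with
  | zero =>
    intro s u v x y S T hS hT _ _
    rw [Finset.card_eq_zero] at hS hT
    subst hS hT
    simp [L, R, E_empty]
  | succ n ih =>
    intro s u v x y S T hS hT hx hy
    obtain ⟨a, S', ha, rfl, hS'⟩ := Finset.card_eq_succ.1 hS
    refine step ha (by omega) hy hx fun b hb s v' y' hy' => ?_
    refine ih _ _ _ _ _ _ _ hS' (by rw [Finset.card_erase_of_mem hb]; omega)
      (hx.mono (by simp)) (hy'.mono (by simp))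

end

end Bifund

/-! ### Return to the original variables -/

theorem bifundamental_intertwiner_UN_UN (N : ℕ) (hN : 1 ≤ N) (κ η : ℂ)
    (hκ : κ ≠ 0) (hη : η ≠ 0) (μ ν : Fin N → ℂ)
    (hμ : Function.Injective μ) (hν : Function.Injective ν)
    (hgen : ∀ i j : Fin N, κ * η⁻¹ * μ i ≠ κ⁻¹ * ν j) (r : ℕ) (hr : r ≤ N) :
    ∑ I ∈ Finset.powersetCard r (Finset.univ : Finset (Fin N)),
      (∏ i ∈ I, ∏ j ∈ Iᶜ, (κ * η⁻¹ * μ i - η * κ⁻¹ * μ j) / (μ i - μ j)) *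
        ∏ i ∈ I, ∏ j : Fin N, (μ i - η⁻¹ * ν j) / (κ * η⁻¹ * μ i - κ⁻¹ * ν j) =
    ∑ I ∈ Finset.powersetCard r (Finset.univ : Finset (Fin N)),
      (∏ i ∈ I, ∏ j ∈ Iᶜ, (κ * η⁻¹ * ν j - η * κ⁻¹ * ν i) / (ν j - ν i)) *
        ∏ i ∈ I, ∏ j : Fin N, (μ j - η⁻¹ * ν i) / (κ * η⁻¹ * μ j - κ⁻¹ * ν i) := by
  -- In terms of `t = κ / η`, `s = t²` and `y = ν / η` every factor becomes a power of `t` times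
  -- the corresponding factor of `Bifund.L` or `Bifund.R`.
  set t : ℂ := κ * η⁻¹ with ht
  have ht0 : t ≠ 0 := mul_ne_zero hκ (inv_ne_zero hη)
  have ht' : η * κ⁻¹ = t⁻¹ := by rw [ht]; field_simp
  set y : Fin N → ℂ := fun j => η⁻¹ * ν j with hy
  have hνy : ∀ j, ν j = η * y j := fun j => by simp [hy, hη]
  have hκy : ∀ j, κ⁻¹ * ν j = t⁻¹ * y j := fun j => by rw [hνy, ← ht']; ring
  have hyinj : Function.Injective y := fun i j h => hν (by rw [hνy, hνy, h])
  have hden : ∀ i j, t ^ 2 * μ i - y j ≠ 0 := by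
    intro i j h
    apply hgen i j
    rw [hκy]
    field_simp
    linear_combination h
  set P : ℂ := ∏ i : Fin N, ∏ j : Fin N, (t ^ 2 * μ i - y j) with hP
  have hP0 : P ≠ 0 := Finset.prod_ne_zero_iff.2 fun i _ => Finset.prod_ne_zero_iff.2 fun j _ =>
    hden i j
  have key := Bifund.component_eq (r := r) (fun u => Bifund.L_eq_R N (t ^ 2) u 1 μ y Finset.univ
    Finset.univ (by simp) (by simp) hμ.injOn hyinj.injOn)
  have hKL : ∀ I ∈ Finset.powersetCard r (Finset.univ : Finset (Fin N)),
      (∏ i ∈ I, ∏ j ∈ Iᶜ, (t * μ i - η * κ⁻¹ * μ j) / (μ i - μ j)) *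
        ∏ i ∈ I, ∏ j : Fin N, (μ i - η⁻¹ * ν j) / (t * μ i - κ⁻¹ * ν j) =
      (t⁻¹ ^ (r * (N - r)) * t ^ (r * N) * P⁻¹) *
        ((∏ i ∈ I, ∏ j ∈ univ \ I, (t ^ 2 * μ i - μ j) / (μ i - μ j)) *
          (∏ i ∈ I, ∏ j, (μ i - y j)) * ∏ i ∈ univ \ I, (1 * ∏ j, (t ^ 2 * μ i - y j))) := by
    intro I hI
    have hIc : I.card = r := (Finset.mem_powersetCard.1 hI).2
    have e1 : (∏ i ∈ I, ∏ j ∈ Iᶜ, (t * μ i - η * κ⁻¹ * μ j) / (μ i - μ j)) =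
        t⁻¹ ^ (r * (N - r)) * ∏ i ∈ I, ∏ j ∈ univ \ I, (t ^ 2 * μ i - μ j) / (μ i - μ j) := by
      have : ∀ i j, (t * μ i - η * κ⁻¹ * μ j) / (μ i - μ j) =
          t⁻¹ * ((t ^ 2 * μ i - μ j) / (μ i - μ j)) := by
        intro i j
        rw [ht', ← mul_div_assoc]
        congr 1
        field_simp
      rw [mul_comm r]
      simp only [this, Finset.prod_mul_distrib, Finset.prod_const, Finset.card_compl, hIc,
        Fintype.card_fin, pow_mul, ← Finset.compl_eq_univ_sdiff]
    have e2 : (∏ i ∈ I, ∏ j : Fin N, (μ i - η⁻¹ * ν j) / (t * μ i - κ⁻¹ * ν j)) =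
        t ^ (r * N) * ((∏ i ∈ I, ∏ j, (μ i - y j)) / ∏ i ∈ I, ∏ j, (t ^ 2 * μ i - y j)) := by
      have : ∀ i j, (μ i - η⁻¹ * ν j) / (t * μ i - κ⁻¹ * ν j) =
          t * ((μ i - y j) / (t ^ 2 * μ i - y j)) := by
        intro i j
        have h1 : t * μ i - κ⁻¹ * ν j = t⁻¹ * (t ^ 2 * μ i - y j) := by
          rw [hκy]; field_simp
        rw [h1, ← div_div, div_inv_eq_mul, mul_comm (μ i - η⁻¹ * ν j), mul_div_assoc]
      rw [mul_comm r]
      simp only [this, Finset.prod_mul_distrib, Finset.prod_const, hIc, Finset.card_univ,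
        Fintype.card_fin, pow_mul, Finset.prod_div_distrib]
    have e3 : P = (∏ i ∈ univ \ I, ∏ j, (t ^ 2 * μ i - y j)) *
        ∏ i ∈ I, ∏ j, (t ^ 2 * μ i - y j) := by
      rw [hP, Finset.prod_sdiff (Finset.subset_univ I)]
    rw [e1, e2, e3]
    rw [e3] at hP0
    have := left_ne_zero_of_mul hP0
    have := right_ne_zero_of_mul hP0
    simp only [one_mul]
    field_simp
  have hKR : ∀ I ∈ Finset.powersetCard r (Finset.univ : Finset (Fin N)),
      (∏ i ∈ I, ∏ j ∈ Iᶜ, (t * ν j - η * κ⁻¹ * ν i) / (ν j - ν i)) *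
        ∏ i ∈ I, ∏ j : Fin N, (μ j - η⁻¹ * ν i) / (t * μ j - κ⁻¹ * ν i) =
      (t⁻¹ ^ (r * (N - r)) * t ^ (r * N) * P⁻¹) *
        ((∏ i ∈ I, ∏ j ∈ univ \ I, (t ^ 2 * y j - y i) / (y j - y i)) *
          (∏ i ∈ I, ∏ j, (μ j - y i)) * ∏ i ∈ univ \ I, (1 * ∏ j, (t ^ 2 * μ j - y i))) := by
    intro I hI
    have hIc : I.card = r := (Finset.mem_powersetCard.1 hI).2
    have e1 : (∏ i ∈ I, ∏ j ∈ Iᶜ, (t * ν j - η * κ⁻¹ * ν i) / (ν j - ν i)) =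
        t⁻¹ ^ (r * (N - r)) * ∏ i ∈ I, ∏ j ∈ univ \ I, (t ^ 2 * y j - y i) / (y j - y i) := by
      have : ∀ i j, (t * ν j - η * κ⁻¹ * ν i) / (ν j - ν i) =
          t⁻¹ * ((t ^ 2 * y j - y i) / (y j - y i)) := by
        intro i j
        have h1 : t * ν j - η * κ⁻¹ * ν i = η * (t⁻¹ * (t ^ 2 * y j - y i)) := by
          rw [ht', hνy, hνy]; field_simp
        have h2 : ν j - ν i = η * (y j - y i) := by rw [hνy, hνy]; ring
        rw [h1, h2, mul_div_mul_left _ _ hη, mul_div_assoc]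
      rw [mul_comm r]
      simp only [this, Finset.prod_mul_distrib, Finset.prod_const, Finset.card_compl, hIc,
        Fintype.card_fin, pow_mul, ← Finset.compl_eq_univ_sdiff]
    have e2 : (∏ i ∈ I, ∏ j : Fin N, (μ j - η⁻¹ * ν i) / (t * μ j - κ⁻¹ * ν i)) =
        t ^ (r * N) * ((∏ i ∈ I, ∏ j, (μ j - y i)) / ∏ i ∈ I, ∏ j, (t ^ 2 * μ j - y i)) := by
      have : ∀ i j, (μ j - η⁻¹ * ν i) / (t * μ j - κ⁻¹ * ν i) =
          t * ((μ j - y i) / (t ^ 2 * μ j - y i)) := by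
        intro i j
        have h1 : t * μ j - κ⁻¹ * ν i = t⁻¹ * (t ^ 2 * μ j - y i) := by
          rw [hκy]; field_simp
        rw [h1, ← div_div, div_inv_eq_mul, mul_comm (μ j - η⁻¹ * ν i), mul_div_assoc]
      rw [mul_comm r]
      simp only [this, Finset.prod_mul_distrib, Finset.prod_const, hIc, Finset.card_univ,
        Fintype.card_fin, pow_mul, Finset.prod_div_distrib]
    have e3 : P = (∏ i ∈ univ \ I, ∏ j, (t ^ 2 * μ j - y i)) *
        ∏ i ∈ I, ∏ j, (t ^ 2 * μ j - y i) := by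
      rw [hP, Finset.prod_sdiff (Finset.subset_univ I), Finset.prod_comm]
    rw [e1, e2, e3]
    rw [e3] at hP0
    have := left_ne_zero_of_mul hP0
    have := right_ne_zero_of_mul hP0
    simp only [one_mul]
    field_simp
  rw [Finset.sum_congr rfl hKL, Finset.sum_congr rfl hKR, ← Finset.mul_sum, ← Finset.mul_sum, key]
end

section
/- Let N ≥ 1 and 0 ≤ M ≤ N, let κ, η ∈ ℂ∖{0}, let μ₁, …, μ_N be pairwise distinct complex numbers and ν₁, …, ν_{N−M} be pairwise distinct complex numbers such that κη⁻¹μ_i ≠ κ⁻¹ν_j for all i, j. For I ⊆ {1,…,N} define c_I(μ) := ∏_{i∈I, j∈{1,…,N}∖I} (κη⁻¹μ_i − ηκ⁻¹μ_j)/(μ_i − μ_j) and Π_I(μ,ν) := ∏_{i∈I} ∏_{j=1}^{N−M} (μ_i − η⁻¹ν_j)/(κη⁻¹μ_i − κ⁻¹ν_j); for I ⊆ {1,…,N−M} define c̄_I(ν) := ∏_{i∈I, j∈{1,…,N−M}∖I} (κη⁻¹ν_j − ηκ⁻¹ν_i)/(ν_j − ν_i) and Π̄_I(μ,ν) := ∏_{i∈I}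 ∏_{j=1}^{N} (μ_j − η⁻¹ν_i)/(κη⁻¹μ_j − κ⁻¹ν_i). Let Dim_s := e_s((κη⁻¹)^{M−1}, (κη⁻¹)^{M−3}, …, (κη⁻¹)^{1−M}) denote the elementary symmetric polynomial of degree s in the M-term geometric sequence (κη⁻¹)^{M−1}, (κη⁻¹)^{M−3}, …, (κη⁻¹)^{1−M}. Then for every 0 ≤ r ≤ N: Σ_{I ⊆ {1,…,N}, |I| = r} c_I(μ)·Π_I(μ,ν) = Σ_{s=0}^{min(r,M)} Dim_s · Σ_{I ⊆ {1,…,N−M}, |I| = r−s} c̄_I(ν)·Π̄_I(μ,ν). -/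
/-!
Put `a = κη⁻¹`, `x = μ`, `y = η⁻¹ν`, `m = N - M`, `n = N`. The identity then only involves `a`, `x`
and `y`, with `a x_i ≠ a⁻¹ y_k`. It is obtained by expanding one `n × n` determinant in two ways.

Let `Q(w) = ∏_k (w - y_k)`. Take as polynomials `p_c` of degree `< n` the `m` polynomials
`Q(w) / (w - y_k)` together with the `M` polynomials `Q(w) w^l`, `0 ≤ l < M`, and consider
`det [ z f(x_i) p_c(a² x_i) + p_c(x_i) ]_{i,c}` with `f(ξ) = ∏_k (ξ - y_k) / (a ξ - a⁻¹ y_k)`.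

* Additivity in the rows (`BF.det_rows`): the term of a set `I` of rows is, up to scalars, the
  Vandermonde determinant of `x` with `x_i` replaced by `a² x_i` for `i ∈ I`. Its quotient by the
  Vandermonde determinant of `x` is `c_I` up to a power of `a` (`BF.vandermonde_scale`).
* Additivity in the columns (`BF.det_columns`): since `f(ξ) Q(a² ξ) = a^m Q(ξ)`, the operation
  `p ↦ f · p(a² ·)` multiplies `Q w^l` by `a^{m+2l}`, and turns
  `Q / (w - y_k)` into a multiple of `Q / (w - a⁻² y_k)`. Hence the term of a set `J ⊔ L` of columns
  is the same kind of determinant with `y_k` replaced by `a⁻² y_k` for `k ∈ J`, and by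
  `BF.det_eval_basis` and `BF.det_coefMat` it is proportional to the Vandermonde determinant of the
  shifted `y`, which produces `c̄_J`; the set `L` produces the monomials of the quantum dimensions.

Comparing the two expansions and rescaling `z` gives the generating identity `BF.generating`, whose
`z^r`-coefficient is the claim.
-/

section BF
open Polynomial Finset Matrix

/-! ### Determinants of evaluated polynomials -/

/-- The evaluation matrix factors as the Vandermonde matrix times the coefficient matrix. -/
theorem BF.det_eval {n : ℕ} (p : Fin n → ℂ[X]) (hp : ∀ c, (p c).natDegree < n) (x : Fin n → ℂ) :
    (Matrix.of fun i c => (p c).eval (x i)).det =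
      (vandermonde x).det * (Matrix.of fun (j : Fin n) c => (p c).coeff j).det := by
  rw [← Matrix.det_mul]
  congr 1
  ext i c
  simp only [of_apply, mul_apply, vandermonde_apply]
  rw [eval_eq_sum_range' (hp c), ← Fin.sum_univ_eq_sum_range (fun j => (p c).coeff j * x i ^ j)]
  exact Finset.sum_congr rfl fun j _ => mul_comm _ _

/-- With `Q = ∏ k, (X - y k)`: the polynomials `Q / (X - y k)`, written without division, for
`k : Fin m`, followed by `Q * X ^ l` for `l : Fin M`. All have degree less than `m + M`. -/
noncomputable def BF.basis {m M : ℕ} (y : Fin m → ℂ) : Fin m ⊕ Fin M → ℂ[X] :=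
  Sum.elim (fun k => ∏ k' ∈ univ.erase k, (X - C (y k')))
    (fun l => (∏ k, (X - C (y k))) * X ^ (l : ℕ))

/-- The matrix of coefficients of `BF.basis y`. Rows are monomial exponents `0, …, m + M - 1`, and the
first summand of the row type stands for the exponents below `m`. -/
noncomputable def BF.coefMat {m M : ℕ} (y : Fin m → ℂ) :
    Matrix (Fin m ⊕ Fin M) (Fin m ⊕ Fin M) ℂ :=
  Matrix.of fun j c => (BF.basis y c).coeff (finSumFinEquiv j : Fin (m + M))

theorem BF.natDegree_erase {m : ℕ} (y : Fin m → ℂ) (k : Fin m) :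
    (∏ k' ∈ univ.erase k, (X - C (y k'))).natDegree < m := by
  rw [natDegree_finsetProd_X_sub_C_eq_card]
  simp
  exact k.pos

theorem BF.natDegree_basis {m M : ℕ} (y : Fin m → ℂ) (c : Fin m ⊕ Fin M) :
    (BF.basis y c).natDegree < m + M := by
  rcases c with k | l
  · exact (BF.natDegree_erase y k).trans_le (Nat.le_add_right _ _)
  · simp only [BF.basis, Sum.elim_inr]
    refine natDegree_mul_le.trans_lt ?_
    rw [natDegree_finsetProd_X_sub_C_eq_card, natDegree_X_pow]
    simp

theorem BF.det_eval_basis {m M : ℕ} (y : Fin m → ℂ) (x : Fin (m + M) → ℂ) :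
    (Matrix.of fun i c => (BF.basis (M := M) y (finSumFinEquiv.symm c)).eval (x i)).det =
      (vandermonde x).det * (BF.coefMat (M := M) y).det := by
  rw [BF.det_eval _ (fun c => BF.natDegree_basis y _) x]
  congr 1
  rw [← Matrix.det_submatrix_equiv_self (finSumFinEquiv (m := m) (n := M))]
  congr 1
  ext i c
  simp [BF.coefMat]

/-- The sign `(-1) ^ (m.choose 2)`, written as a product over pairs `i < j`. -/
noncomputable def BF.eps (m : ℕ) : ℂ := ∏ i : Fin m, ∏ _j ∈ Ioi i, (-1)

theorem BF.eps_ne_zero (m : ℕ) : BF.eps m ≠ 0 := by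
  simp [BF.eps, Finset.prod_eq_zero_iff]

/-- Evaluating the polynomials `∏ k' ≠ k, (X - y k')` at the points `y` themselves gives a diagonal
matrix, so the coefficient determinant times the Vandermonde determinant is, up to sign, the
square of the latter. No injectivity of `y` is needed: with a repeated entry both sides vanish. -/
theorem BF.det_coef_square {m : ℕ} (y : Fin m → ℂ) :
    (Matrix.of fun (j : Fin m) k => (∏ k' ∈ univ.erase k, (X - C (y k'))).coeff j).det =
      BF.eps m * (vandermonde y).det := by
  by_cases hy : Function.Injective y
  · have h := BF.det_eval _ (BF.natDegree_erase y) y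
    have hd : (Matrix.of fun (i k : Fin m) => (∏ k' ∈ univ.erase k, (X - C (y k'))).eval (y i)) =
        Matrix.diagonal fun k => ∏ k' ∈ {k}ᶜ, (y k - y k') := by
      ext i k
      simp only [of_apply, eval_prod, eval_sub, eval_X, eval_C, diagonal_apply]
      split_ifs with hik
      · subst hik
        refine Finset.prod_congr ?_ fun _ _ => rfl
        ext; simp
      · exact Finset.prod_eq_zero (i := i) (by simpa using hik) (by simp)
    rw [hd, det_diagonal,
      ← Finset.prod_prod_Ioi_mul_eq_prod_prod_off_diag (fun j i => y i - y j)] at h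
    have hV := Matrix.det_vandermonde_ne_zero_iff.mpr hy
    apply mul_left_cancel₀ hV
    rw [← h, BF.eps, Matrix.det_vandermonde]
    rw [← Finset.prod_mul_distrib, ← Finset.prod_mul_distrib]
    simp_rw [← Finset.prod_mul_distrib]
    exact Finset.prod_congr rfl fun i _ => Finset.prod_congr rfl fun j _ => by ring
  · have hV : (vandermonde y).det = 0 := by
      by_contra h
      exact hy (Matrix.det_vandermonde_ne_zero_iff.mp h)
    rw [hV, mul_zero]
    simp only [Function.Injective, not_forall] at hy
    obtain ⟨i, j, hij, hne⟩ := hy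
    refine Matrix.det_zero_of_column_eq hne fun k => ?_
    simp only [of_apply]
    congr 1
    rw [← Finset.mul_prod_erase (univ.erase i) _ (a := j) (by simpa using Ne.symm hne),
      ← Finset.mul_prod_erase (univ.erase j) _ (a := i) (by simpa using hne),
      hij, Finset.erase_right_comm]

/-- The coefficient matrix is block triangular with a unitriangular lower right block, because
`Q * X ^ l` is monic of degree `m + l`. -/
theorem BF.det_coefMat {m M : ℕ} (y : Fin m → ℂ) :
    (BF.coefMat (M := M) y).det = BF.eps m * (vandermonde y).det := by
  have hb : BF.coefMat (M := M) y = Matrix.fromBlocks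
      (Matrix.of fun (j : Fin m) k => (∏ k' ∈ univ.erase k, (X - C (y k'))).coeff j)
      (Matrix.of fun (j : Fin m) (l : Fin M) => ((∏ k, (X - C (y k))) * X ^ (l : ℕ)).coeff j) 0
      (Matrix.of fun (j l : Fin M) => ((∏ k, (X - C (y k))) * X ^ (l : ℕ)).coeff (m + j)) := by
    ext i c
    rcases i with i | i <;> rcases c with c | c <;> simp [BF.coefMat, BF.basis]
    exact coeff_eq_zero_of_natDegree_lt
      ((BF.natDegree_erase y c).trans_le (Nat.le_add_right _ _))
  have hQ : (∏ k, (X - C (y k))).natDegree = m := by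
    rw [natDegree_finsetProd_X_sub_C_eq_card]; simp
  have hQ1 : (∏ k, (X - C (y k))).coeff m = 1 := by
    have := (monic_prod_X_sub_C y univ).coeff_natDegree
    rwa [hQ] at this
  rw [hb, det_fromBlocks_zero₂₁, BF.det_coef_square]
  conv_rhs => rw [← mul_one (BF.eps m * _)]
  congr 1
  rw [Matrix.det_of_isUpperTriangular]
  · refine Finset.prod_eq_one fun l _ => ?_
    simp only [of_apply, coeff_mul_X_pow, hQ1]
  · intro i j hij
    have hij' : (j : ℕ) < i := hij
    simp only [of_apply]
    refine coeff_eq_zero_of_natDegree_lt (natDegree_mul_le.trans_lt ?_)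
    rw [hQ, natDegree_X_pow]; omega

/-- Scaling the entries in `I` by `a ^ 2` multiplies the Vandermonde determinant by
`(a ^ (n - 1)) ^ #I * c_I`. The factor `a ^ #I` on the left avoids the subtraction `n - 1`. -/
theorem BF.vandermonde_scale {n : ℕ} (a : ℂ) (ha : a ≠ 0) (x : Fin n → ℂ)
    (hx : Function.Injective x) (I : Finset (Fin n)) :
    a ^ #I * (vandermonde fun i => if i ∈ I then a ^ 2 * x i else x i).det =
      (a ^ n) ^ #I * (∏ i ∈ I, ∏ j ∈ Iᶜ, (a * x i - a⁻¹ * x j) / (x i - x j)) *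
        (vandermonde x).det := by
  -- For `i < j` the quotient of the scaled and unscaled factors is `F i j * F j i`; the diagonal
  -- entries `F i i` contribute the extra `a ^ #I`.
  set F : Fin n → Fin n → ℂ := fun i j =>
    if i ∈ I then a * (if j ∈ I then 1 else (a * x i - a⁻¹ * x j) / (x i - x j)) else 1 with hF
  have h1 : (vandermonde fun i => if i ∈ I then a ^ 2 * x i else x i).det =
      (∏ i, ∏ j ∈ {i}ᶜ, F i j) * (vandermonde x).det := by
    rw [← Finset.prod_prod_Ioi_mul_eq_prod_prod_off_diag (fun j i => F i j), det_vandermonde,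
      det_vandermonde]
    simp only [← Finset.prod_mul_distrib]
    refine Finset.prod_congr rfl fun i _ => Finset.prod_congr rfl fun j hj => ?_
    have hij : x i - x j ≠ 0 := sub_ne_zero.mpr fun h => (Finset.mem_Ioi.mp hj).ne (hx h)
    have hji : x j - x i ≠ 0 := sub_ne_zero.mpr fun h => (Finset.mem_Ioi.mp hj).ne' (hx h)
    by_cases hi : i ∈ I <;> by_cases hj : j ∈ I <;> simp only [hF, hi, hj, if_true, if_false] <;>
      field_simp <;> ring
  have h2 : ∏ i, ∏ j, F i j = (∏ i, ∏ j ∈ {i}ᶜ, F i j) * a ^ #I := by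
    have : a ^ #I = ∏ i, F i i := by
      rw [← Finset.prod_const, ← Finset.prod_subset (Finset.subset_univ I)]
      · exact Finset.prod_congr rfl fun i hi => by simp [hF, hi]
      · exact fun i _ hi => by simp [hF, hi]
    rw [this, ← Finset.prod_mul_distrib]
    refine Finset.prod_congr rfl fun i _ => ?_
    rw [mul_comm, ← Finset.mul_prod_erase univ _ (Finset.mem_univ i)]
    congr 1
    refine Finset.prod_congr ?_ fun _ _ => rfl
    ext; simp
  have h3 : ∏ i, ∏ j, F i j =
      (a ^ n) ^ #I * (∏ i ∈ I, ∏ j ∈ Iᶜ, (a * x i - a⁻¹ * x j) / (x i - x j)) := by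
    rw [← Finset.prod_const, ← Finset.prod_mul_distrib, ← Finset.prod_mul_prod_compl I,
      Finset.prod_eq_one (s := Iᶜ), mul_one]
    · refine Finset.prod_congr rfl fun i hi => ?_
      simp only [hF, hi, if_true, Finset.prod_mul_distrib]
      congr 1
      · simp
      · rw [← Finset.prod_subset (Finset.subset_univ Iᶜ)]
        · refine Finset.prod_congr rfl fun j hj => ?_
          rw [if_neg (by simpa using hj)]
        · intro j _ hj
          rw [if_pos (by simpa using hj)]
    · intro i hi
      refine Finset.prod_eq_one fun j _ => ?_
      simp only [hF]; rw [if_neg (by simpa using hi)]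
  rw [h1, ← h3, h2]; ring

/-! ### Row expansion -/

theorem BF.det_add_rows {ι : Type*} [Fintype ι] [DecidableEq ι] (A B : Matrix ι ι ℂ) :
    (A + B).det = ∑ S : Finset ι, (Matrix.of fun i c => if i ∈ S then A i c else B i c).det := by
  refine (Matrix.detRowAlternating.map_add_univ A B).trans
    (Finset.sum_congr rfl fun S _ => ?_)
  change Matrix.det _ = _
  congr 1
  ext i c
  by_cases h : i ∈ S <;> simp [Finset.piecewise, h]

theorem BF.det_add_columns {ι : Type*} [Fintype ι] [DecidableEq ι] (A B : Matrix ι ι ℂ) :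
    (A + B).det = ∑ S : Finset ι, (Matrix.of fun i c => if c ∈ S then A i c else B i c).det := by
  rw [← det_transpose, transpose_add, BF.det_add_rows]
  refine Finset.sum_congr rfl fun S _ => ?_
  rw [← det_transpose]
  rfl

/-- The hypermultiplet factor of one variable, `∏ k, (ξ - y k) / (a ξ - a⁻¹ y k)`. -/
noncomputable def BF.hyper {m : ℕ} (a : ℂ) (y : Fin m → ℂ) (ξ : ℂ) : ℂ :=
  ∏ k, (ξ - y k) / (a * ξ - a⁻¹ * y k)

/-- The expansion of the two-term determinant over sets of rows. -/
theorem BF.det_rows {m M : ℕ} (a z : ℂ) (ha : a ≠ 0) (y : Fin m → ℂ) (x : Fin (m + M) → ℂ)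
    (hx : Function.Injective x) :
    (Matrix.of fun i c => z * BF.hyper a y (x i) *
          (BF.basis (M := M) y (finSumFinEquiv.symm c)).eval (a ^ 2 * x i) +
        (BF.basis (M := M) y (finSumFinEquiv.symm c)).eval (x i)).det =
      ∑ I : Finset (Fin (m + M)), (z * (a ^ (m + M) / a)) ^ #I *
        ((∏ i ∈ I, ∏ j ∈ Iᶜ, (a * x i - a⁻¹ * x j) / (x i - x j)) *
          ∏ i ∈ I, BF.hyper a y (x i)) *
        ((vandermonde x).det * (BF.coefMat (M := M) y).det) := by
  refine (BF.det_add_rows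
    (Matrix.of fun i c => z * BF.hyper a y (x i) *
          (BF.basis (M := M) y (finSumFinEquiv.symm c)).eval (a ^ 2 * x i))
    (Matrix.of fun i c => (BF.basis (M := M) y (finSumFinEquiv.symm c)).eval (x i))).trans
    (Finset.sum_congr rfl fun I _ => ?_)
  have h : (Matrix.of fun i c => if i ∈ I then (Matrix.of fun i c => z * BF.hyper a y (x i) *
          (BF.basis (M := M) y (finSumFinEquiv.symm c)).eval (a ^ 2 * x i)) i c else
        (Matrix.of fun i c => (BF.basis (M := M) y (finSumFinEquiv.symm c)).eval (x i)) i c) =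
      Matrix.of fun i c => (if i ∈ I then z * BF.hyper a y (x i) else 1) *
        (Matrix.of fun i c => (BF.basis (M := M) y (finSumFinEquiv.symm c)).eval
          (if i ∈ I then a ^ 2 * x i else x i)) i c := by
    ext i c
    by_cases hi : i ∈ I <;> simp [hi]
  have hV := BF.vandermonde_scale a ha x hx I
  have haI : a ^ #I ≠ 0 := pow_ne_zero _ ha
  rw [h, det_mul_column, BF.det_eval_basis, Finset.prod_ite_mem, Finset.univ_inter,
    Finset.prod_mul_distrib, Finset.prod_const]
  rw [mul_comm, ← eq_div_iff haI] at hV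
  rw [hV, mul_pow, div_pow]
  ring

/-! ### Column expansion -/

/-- The tuple `y` with the entries in `J` multiplied by `a⁻¹ ^ 2`. -/
noncomputable def BF.shift {m : ℕ} (a : ℂ) (y : Fin m → ℂ) (J : Finset (Fin m)) : Fin m → ℂ :=
  fun k => if k ∈ J then a⁻¹ ^ 2 * y k else y k

/-- The quotient `∏ k, (ξ - y k) / ∏ k, (ξ - y' k)` with `y' = BF.shift a y J`, where the factors
`k ∉ J` are cancelled; this keeps it meaningful when `ξ = y k` for some `k ∉ J`. -/
noncomputable def BF.ratio {m : ℕ} (a : ℂ) (y : Fin m → ℂ) (J : Finset (Fin m)) (ξ : ℂ) : ℂ :=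
  ∏ k ∈ J, (ξ - y k) / (ξ - a⁻¹ ^ 2 * y k)

theorem BF.sub_ne {a ξ w : ℂ} (ha : a ≠ 0) (h : a * ξ ≠ a⁻¹ * w) : ξ - a⁻¹ ^ 2 * w ≠ 0 := by
  intro h0
  apply h
  rw [sub_eq_zero.mp h0]
  field_simp

theorem BF.ratio_mul_prod {m : ℕ} {a : ℂ} (ha : a ≠ 0) (y : Fin m → ℂ) {ξ : ℂ}
    (hξ : ∀ k, a * ξ ≠ a⁻¹ * y k) {J T : Finset (Fin m)} (hJ : J ⊆ T) :
    BF.ratio a y J ξ * ∏ k ∈ T, (ξ - BF.shift a y J k) = ∏ k ∈ T, (ξ - y k) := by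
  have h : BF.ratio a y J ξ =
      ∏ k ∈ T, if k ∈ J then (ξ - y k) / (ξ - a⁻¹ ^ 2 * y k) else 1 := by
    rw [Finset.prod_ite_mem, Finset.inter_eq_right.mpr hJ, BF.ratio]
  rw [h, ← Finset.prod_mul_distrib]
  refine Finset.prod_congr rfl fun k _ => ?_
  by_cases hk : k ∈ J
  · simp only [BF.shift, hk, if_true]
    exact div_mul_cancel₀ _ (BF.sub_ne ha (hξ k))
  · simp [BF.shift, hk]

theorem BF.hyper_mul_prod {m : ℕ} {a : ℂ} (ha : a ≠ 0) (y : Fin m → ℂ) {ξ : ℂ}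
    (hξ : ∀ k, a * ξ ≠ a⁻¹ * y k) :
    BF.hyper a y ξ * ∏ k, (a ^ 2 * ξ - y k) = a ^ m * ∏ k, (ξ - y k) := by
  have : a ^ m = ∏ _k : Fin m, a := by simp
  rw [BF.hyper, this, ← Finset.prod_mul_distrib, ← Finset.prod_mul_distrib]
  refine Finset.prod_congr rfl fun k _ => ?_
  have h1 : a * ξ - a⁻¹ * y k ≠ 0 := sub_ne_zero.mpr (hξ k)
  rw [div_mul_eq_mul_div, div_eq_iff h1]
  field_simp

/-- In a column `k ∈ J`, the `f · p(a² ·)` part is the corresponding entry for the shifted tuple, up to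
a factor depending only on the row and a factor depending only on the column. -/
theorem BF.eval_entry_of_mem {m M : ℕ} {a : ℂ} (ha : a ≠ 0) (y : Fin m → ℂ) {ξ : ℂ}
    (hξ : ∀ k, a * ξ ≠ a⁻¹ * y k) {J : Finset (Fin m)} {k : Fin m} (hk : k ∈ J) :
    BF.hyper a y ξ * (BF.basis (M := M) y (Sum.inl k)).eval (a ^ 2 * ξ) =
      BF.ratio a y J ξ * (a ^ m / a ^ 2 *
        (BF.basis (M := M) (BF.shift a y J) (Sum.inl k)).eval ξ) := by
  have h1 := BF.ratio_mul_prod ha y hξ (Finset.subset_univ J)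
  have h2 := BF.hyper_mul_prod ha y hξ
  rw [← h1, ← Finset.mul_prod_erase univ _ (Finset.mem_univ k),
    ← Finset.mul_prod_erase univ _ (Finset.mem_univ k)] at h2
  simp only [BF.basis, Sum.elim_inl, eval_prod, eval_sub, eval_X, eval_C]
  have h3 : BF.shift a y J k = a⁻¹ ^ 2 * y k := by simp [BF.shift, hk]
  have h4 := BF.sub_ne ha (hξ k)
  have h5 : a ^ 2 * ξ - y k = a ^ 2 * (ξ - a⁻¹ ^ 2 * y k) := by field_simp
  rw [h3, h5] at h2
  apply mul_left_cancel₀ h4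
  apply mul_left_cancel₀ (pow_ne_zero 2 ha)
  have h6 : a ^ m = a ^ 2 * (a ^ m / a ^ 2) := by field_simp
  rw [h6] at h2
  linear_combination h2

/-- The `f · p(a² ·)` part of the column `Q * X ^ l`, in the same factored form. -/
theorem BF.eval_entry_inr_of_mem {m M : ℕ} {a : ℂ} (ha : a ≠ 0) (y : Fin m → ℂ) {ξ : ℂ}
    (hξ : ∀ k, a * ξ ≠ a⁻¹ * y k) (J : Finset (Fin m)) (l : Fin M) :
    BF.hyper a y ξ * (BF.basis y (Sum.inr l)).eval (a ^ 2 * ξ) =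
      BF.ratio a y J ξ * (a ^ m * a ^ (2 * (l : ℕ)) *
        (BF.basis (BF.shift a y J) (Sum.inr l)).eval ξ) := by
  have h1 := BF.ratio_mul_prod ha y hξ (Finset.subset_univ J)
  have h2 := BF.hyper_mul_prod ha y hξ
  rw [← h1] at h2
  simp only [BF.basis, Sum.elim_inr, eval_prod, eval_sub, eval_X, eval_C, eval_mul, eval_pow,
    mul_pow, ← pow_mul]
  linear_combination (a ^ (2 * (l : ℕ)) * ξ ^ (l : ℕ)) * h2

/-- Unmodified columns other than those in `J` carry the same row factor `BF.ratio`. -/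
theorem BF.eval_entry_of_notMem {m M : ℕ} {a : ℂ} (ha : a ≠ 0) (y : Fin m → ℂ) {ξ : ℂ}
    (hξ : ∀ k, a * ξ ≠ a⁻¹ * y k) (J : Finset (Fin m)) (c : Fin m ⊕ Fin M)
    (hc : ∀ k ∈ J, c ≠ Sum.inl k) :
    (BF.basis y c).eval ξ = BF.ratio a y J ξ * (BF.basis (BF.shift a y J) c).eval ξ := by
  rcases c with k | l
  · have hk : k ∉ J := fun h => hc k h rfl
    simp only [BF.basis, Sum.elim_inl, eval_prod, eval_sub, eval_X, eval_C]
    exact (BF.ratio_mul_prod ha y hξ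
      (fun j hj => Finset.mem_erase.mpr ⟨fun h : j = k => hk (h ▸ hj), Finset.mem_univ j⟩)).symm
  · simp only [BF.basis, Sum.elim_inr, eval_prod, eval_sub, eval_X, eval_C, eval_mul, eval_pow]
    rw [← mul_assoc, BF.ratio_mul_prod ha y hξ (Finset.subset_univ J)]

theorem BF.prod_ratio {n m : ℕ} {a : ℂ} (ha : a ≠ 0) (y : Fin m → ℂ) (x : Fin n → ℂ)
    (J : Finset (Fin m)) :
    ∏ i, BF.ratio a y J (x i) =
      (a ^ n) ^ #J * ∏ k ∈ J, ∏ i, (x i - y k) / (a * x i - a⁻¹ * y k) := by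
  simp only [BF.ratio]
  rw [Finset.prod_comm, ← Finset.prod_const, ← Finset.prod_mul_distrib]
  refine Finset.prod_congr rfl fun k _ => ?_
  have : a ^ n = ∏ _i : Fin n, a := by simp
  rw [this, ← Finset.prod_mul_distrib]
  refine Finset.prod_congr rfl fun i _ => ?_
  have h5 : a * x i - a⁻¹ * y k = a * (x i - a⁻¹ ^ 2 * y k) := by field_simp
  rw [h5, ← mul_div_assoc, mul_div_mul_left _ _ ha]

/-- The expansion of the same determinant over sets of columns, a set of columns being a pair `(J, L)`. -/
theorem BF.det_columns {m M : ℕ} (a z : ℂ) (ha : a ≠ 0) (y : Fin m → ℂ) (x : Fin (m + M) → ℂ)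
    (hy : Function.Injective y) (hxy : ∀ i k, a * x i ≠ a⁻¹ * y k) :
    (Matrix.of fun i c => z * BF.hyper a y (x i) *
          (BF.basis (M := M) y (finSumFinEquiv.symm c)).eval (a ^ 2 * x i) +
        (BF.basis (M := M) y (finSumFinEquiv.symm c)).eval (x i)).det =
      ∑ J : Finset (Fin m), ∑ L : Finset (Fin M), (z * (a ^ (m + M) / a)) ^ #J *
        ((∏ i ∈ J, ∏ j ∈ Jᶜ, (a * y j - a⁻¹ * y i) / (y j - y i)) *
          ∏ k ∈ J, ∏ i, (x i - y k) / (a * x i - a⁻¹ * y k)) *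
        (∏ l ∈ L, z * (a ^ m * a ^ (2 * (l : ℕ)))) *
        ((vandermonde x).det * (BF.coefMat (M := M) y).det) := by
  rw [← Matrix.det_submatrix_equiv_self (finSumFinEquiv (m := m) (n := M))]
  refine (BF.det_add_columns
    (Matrix.of fun i c => z * BF.hyper a y (x (finSumFinEquiv i)) *
          (BF.basis (M := M) y (finSumFinEquiv.symm (finSumFinEquiv c))).eval
            (a ^ 2 * x (finSumFinEquiv i)))
    (Matrix.of fun i c => (BF.basis (M := M) y (finSumFinEquiv.symm (finSumFinEquiv c))).eval
      (x (finSumFinEquiv i)))).trans ?_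
  rw [← Fintype.sum_prod_type']
  refine Fintype.sum_equiv Finset.sumEquiv.toEquiv _ _ fun S => ?_
  obtain ⟨J, hJ⟩ : ∃ J, J = S.toLeft := ⟨_, rfl⟩
  obtain ⟨L, hL⟩ : ∃ L, L = S.toRight := ⟨_, rfl⟩
  have hSl : ∀ k, Sum.inl k ∈ S ↔ k ∈ J := by simp [hJ]
  have hSr : ∀ l, Sum.inr l ∈ S ↔ l ∈ L := by simp [hL]
  set v : Fin m ⊕ Fin M → ℂ := Sum.elim (fun k => if k ∈ J then z * (a ^ m / a ^ 2) else 1)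
    (fun l => if l ∈ L then z * (a ^ m * a ^ (2 * (l : ℕ))) else 1) with hv
  have h : (Matrix.of fun i c => if c ∈ S then
        (Matrix.of fun i c => z * BF.hyper a y (x (finSumFinEquiv i)) *
          (BF.basis (M := M) y (finSumFinEquiv.symm (finSumFinEquiv c))).eval
            (a ^ 2 * x (finSumFinEquiv i))) i c else
        (Matrix.of fun i c => (BF.basis (M := M) y (finSumFinEquiv.symm (finSumFinEquiv c))).eval
          (x (finSumFinEquiv i))) i c) =
      Matrix.of fun i c => BF.ratio a y J (x (finSumFinEquiv i)) *
        (Matrix.of fun i c => v c *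
          ((Matrix.of fun i c =>
            (BF.basis (M := M) (BF.shift a y J) (finSumFinEquiv.symm c)).eval (x i)).submatrix
              finSumFinEquiv finSumFinEquiv) i c) i c := by
    ext i c
    simp only [of_apply, submatrix_apply, Equiv.symm_apply_apply]
    have hξ := hxy (finSumFinEquiv i)
    rcases c with k | l
    · by_cases hk : k ∈ J
      · simp only [hSl, hk, if_true, hv, Sum.elim_inl]
        linear_combination z * BF.eval_entry_of_mem (M := M) ha y hξ hk
      · simp only [hSl, hk, if_false, hv, Sum.elim_inl, one_mul]
        exact BF.eval_entry_of_notMem ha y hξ J _ fun k' hk' h =>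
          hk (Sum.inl.inj h ▸ hk')
    · by_cases hl : l ∈ L
      · simp only [hSr, hl, if_true, hv, Sum.elim_inr]
        linear_combination z * BF.eval_entry_inr_of_mem (M := M) ha y hξ J l
      · simp only [hSr, hl, if_false, hv, Sum.elim_inr, one_mul]
        exact BF.eval_entry_of_notMem ha y hξ J _ fun k' hk' h => by simp at h
  have hρ : ∏ i : Fin m ⊕ Fin M, BF.ratio a y J (x (finSumFinEquiv i)) =
      ∏ i, BF.ratio a y J (x i) :=
    Equiv.prod_comp finSumFinEquiv fun i => BF.ratio a y J (x i)
  -- The scaling lemma with `a⁻¹` in place of `a` gives the barred coefficients.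
  have hV := BF.vandermonde_scale a⁻¹ (inv_ne_zero ha) y hy J
  have hc : ∏ i ∈ J, ∏ j ∈ Jᶜ, (a⁻¹ * y i - a⁻¹⁻¹ * y j) / (y i - y j) =
      ∏ i ∈ J, ∏ j ∈ Jᶜ, (a * y j - a⁻¹ * y i) / (y j - y i) := by
    refine Finset.prod_congr rfl fun i _ => Finset.prod_congr rfl fun j _ => ?_
    rw [inv_inv, ← neg_div_neg_eq, neg_sub, neg_sub]
  have hV' : (vandermonde (BF.shift a y J)).det = a ^ #J * ((a⁻¹ ^ m) ^ #J *
      (∏ i ∈ J, ∏ j ∈ Jᶜ, (a * y j - a⁻¹ * y i) / (y j - y i)) * (vandermonde y).det) := by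
    rw [← hc, ← hV, ← mul_assoc, ← mul_pow, mul_inv_cancel₀ ha, one_pow, one_mul]
    rfl
  rw [h, det_mul_column, det_mul_row, Matrix.det_submatrix_equiv_self, BF.det_eval_basis,
    BF.det_coefMat, BF.det_coefMat, hρ, BF.prod_ratio ha, hV', Fintype.prod_sum_type]
  simp only [hv, Sum.elim_inl, Sum.elim_inr, Finset.prod_ite_mem, Finset.univ_inter,
    Finset.prod_const]
  have hs : (z * (a ^ (m + M) / a)) ^ #J =
      (a ^ (m + M)) ^ #J * (z * (a ^ m / a ^ 2)) ^ #J * a ^ #J * (a⁻¹ ^ m) ^ #J := by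
    have hm : a ^ m * a⁻¹ ^ m = 1 := by rw [← mul_pow, mul_inv_cancel₀ ha, one_pow]
    simp only [← mul_pow]
    congr 1
    field_simp
    linear_combination (-z) * hm
  change _ = (z * (a ^ (m + M) / a)) ^ #S.toLeft *
        ((∏ i ∈ S.toLeft, ∏ j ∈ (S.toLeft)ᶜ, (a * y j - a⁻¹ * y i) / (y j - y i)) *
          ∏ k ∈ S.toLeft, ∏ i, (x i - y k) / (a * x i - a⁻¹ * y k)) *
        (∏ l ∈ S.toRight, z * (a ^ m * a ^ (2 * (l : ℕ)))) * _
  rw [← hJ, ← hL, hs]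
  ring

/-! ### Comparison of the two expansions -/

/-- The generating function in `z` of the identities for all `r`. -/
theorem BF.generating {m M : ℕ} (a z : ℂ) (ha : a ≠ 0) (y : Fin m → ℂ) (x : Fin (m + M) → ℂ)
    (hx : Function.Injective x) (hy : Function.Injective y)
    (hxy : ∀ i k, a * x i ≠ a⁻¹ * y k) :
    ∑ I : Finset (Fin (m + M)), z ^ #I *
        ((∏ i ∈ I, ∏ j ∈ Iᶜ, (a * x i - a⁻¹ * x j) / (x i - x j)) *
          ∏ i ∈ I, ∏ k, (x i - y k) / (a * x i - a⁻¹ * y k)) =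
      (∑ L : Finset (Fin M), z ^ #L * ∏ l ∈ L, a ^ (2 * (l : ℤ) + 1 - M)) *
      ∑ J : Finset (Fin m), z ^ #J *
        ((∏ i ∈ J, ∏ j ∈ Jᶜ, (a * y j - a⁻¹ * y i) / (y j - y i)) *
          ∏ k ∈ J, ∏ i, (x i - y k) / (a * x i - a⁻¹ * y k)) := by
  have hb : a ^ (m + M) / a ≠ 0 := div_ne_zero (pow_ne_zero _ ha) ha
  -- The rescaling absorbs the factor `a ^ (n - 1)` attached to each element of `I` and of `J`.
  obtain ⟨w, rfl⟩ : ∃ w, z = w * (a ^ (m + M) / a) := ⟨z / (a ^ (m + M) / a), by field_simp⟩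
  have h := (BF.det_rows a w ha y x hx).symm.trans (BF.det_columns a w ha y x hy hxy)
  have hD : (vandermonde x).det * (BF.coefMat (M := M) y).det ≠ 0 := by
    rw [BF.det_coefMat]
    exact mul_ne_zero (det_vandermonde_ne_zero_iff.mpr hx)
      (mul_ne_zero (BF.eps_ne_zero m) (det_vandermonde_ne_zero_iff.mpr hy))
  simp only [← Finset.sum_mul (a := (vandermonde x).det * (BF.coefMat (M := M) y).det)] at h
  refine (mul_right_cancel₀ hD h).trans (Eq.trans ?_ (mul_comm _ _))
  rw [Finset.sum_mul_sum]
  refine Finset.sum_congr rfl fun J _ => Finset.sum_congr rfl fun L _ => ?_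
  congr 1
  rw [← Finset.prod_const, ← Finset.prod_mul_distrib]
  refine Finset.prod_congr rfl fun l _ => ?_
  rw [mul_assoc]
  congr 1
  have : a ^ (m + M) / a = a ^ ((m : ℤ) + M - 1) := by
    rw [zpow_sub_one₀ ha, ← Nat.cast_add, zpow_natCast, div_eq_mul_inv]
  rw [this, ← zpow_natCast, ← zpow_natCast, ← zpow_add₀ ha, ← zpow_add₀ ha]
  congr 1
  push_cast
  ring

/-- The polynomial `∑ I, f I * X ^ #I`, grading a function on subsets by cardinality. -/
noncomputable def BF.genPoly {n : ℕ} (f : Finset (Fin n) → ℂ) : ℂ[X] :=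
  ∑ I, C (f I) * X ^ #I

theorem BF.eval_genPoly {n : ℕ} (f : Finset (Fin n) → ℂ) (z : ℂ) :
    (BF.genPoly f).eval z = ∑ I, z ^ #I * f I := by
  simp only [BF.genPoly, eval_finsetSum, eval_mul, eval_C, eval_pow, eval_X]
  exact Finset.sum_congr rfl fun I _ => mul_comm _ _

theorem BF.coeff_genPoly {n : ℕ} (f : Finset (Fin n) → ℂ) (r : ℕ) :
    (BF.genPoly f).coeff r = ∑ I ∈ powersetCard r univ, f I := by
  have : powersetCard r (univ : Finset (Fin n)) = univ.filter fun I => #I = r := by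
    ext; simp
  simp only [BF.genPoly, finsetSum_coeff, coeff_C_mul, coeff_X_pow, this, Finset.sum_filter]
  exact Finset.sum_congr rfl fun I _ => by simp [eq_comm]

/-- The identity in the normalized variables `a`, `x`, `y`. -/
theorem BF.main {m M : ℕ} (a : ℂ) (ha : a ≠ 0) (y : Fin m → ℂ) (x : Fin (m + M) → ℂ)
    (hx : Function.Injective x) (hy : Function.Injective y)
    (hxy : ∀ i k, a * x i ≠ a⁻¹ * y k) (r : ℕ) :
    ∑ I ∈ powersetCard r (univ : Finset (Fin (m + M))),
        ((∏ i ∈ I, ∏ j ∈ Iᶜ, (a * x i - a⁻¹ * x j) / (x i - x j)) *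
          ∏ i ∈ I, ∏ k, (x i - y k) / (a * x i - a⁻¹ * y k)) =
      ∑ s ∈ Finset.range (min r M + 1),
      (∑ L ∈ powersetCard s (univ : Finset (Fin M)), ∏ l ∈ L, a ^ ((M : ℤ) - 1 - 2 * (l : ℕ))) *
      ∑ J ∈ powersetCard (r - s) (univ : Finset (Fin m)),
        ((∏ i ∈ J, ∏ j ∈ Jᶜ, (a * y j - a⁻¹ * y i) / (y j - y i)) *
          ∏ k ∈ J, ∏ i, (x i - y k) / (a * x i - a⁻¹ * y k)) := by
  have hpoly : BF.genPoly (fun I : Finset (Fin (m + M)) =>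
        (∏ i ∈ I, ∏ j ∈ Iᶜ, (a * x i - a⁻¹ * x j) / (x i - x j)) *
          ∏ i ∈ I, ∏ k, (x i - y k) / (a * x i - a⁻¹ * y k)) =
      BF.genPoly (fun L : Finset (Fin M) => ∏ l ∈ L, a ^ (2 * (l : ℤ) + 1 - M)) *
      BF.genPoly (fun J : Finset (Fin m) =>
        (∏ i ∈ J, ∏ j ∈ Jᶜ, (a * y j - a⁻¹ * y i) / (y j - y i)) *
          ∏ k ∈ J, ∏ i, (x i - y k) / (a * x i - a⁻¹ * y k)) := by
    refine Polynomial.funext fun z => ?_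
    rw [eval_mul, BF.eval_genPoly, BF.eval_genPoly, BF.eval_genPoly]
    exact BF.generating a z ha y x hx hy hxy
  have h := congrArg (fun p => p.coeff r) hpoly
  simp only [coeff_mul, BF.coeff_genPoly] at h
  rw [h, Finset.Nat.sum_antidiagonal_eq_sum_range_succ_mk]
  have hsub : Finset.range (min r M + 1) ⊆ Finset.range r.succ := by
    intro s hs
    simp only [Finset.mem_range] at hs ⊢
    omega
  rw [← Finset.sum_subset hsub]
  · refine Finset.sum_congr rfl fun s _ => ?_
    congr 1
    -- Reversing `Fin M` turns the exponents `2 l + 1 - M` into `M - 1 - 2 l`.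
    refine Finset.sum_equiv (Equiv.finsetCongr Fin.revPerm) (by simp) fun L _ => ?_
    rw [Equiv.finsetCongr_apply, Finset.prod_map]
    refine Finset.prod_congr rfl fun l _ => ?_
    congr 1
    have := l.isLt
    simp only [Equiv.coe_toEmbedding, Fin.revPerm_apply, Fin.val_rev]
    omega
  -- The terms with `M < s ≤ r` vanish, as `Fin M` has no subset of size `s`.
  · intro s hs hs'
    simp only [Finset.mem_range] at hs hs'
    rw [Finset.powersetCard_eq_empty.mpr, Finset.sum_empty, zero_mul]
    simp
    omega

end BF

/-- The `U(N)×U(N−M)` bifundamental intertwining identity with quantum-dimension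
multiplicities: for every `0 ≤ r ≤ N`,
`Σ_{|I|=r} c_I(μ) Π_I(μ,ν) = Σ_{s=0}^{min(r,M)} Dim_s · Σ_{|I|=r−s} c̄_I(ν) Π̄_I(μ,ν)`,
where `Dim_s = e_s((κη⁻¹)^{M−1}, (κη⁻¹)^{M−3}, …, (κη⁻¹)^{1−M})`. -/
theorem bifundamental_intertwiner_UN_UNmM (N M : ℕ) (hN : 1 ≤ N) (hM : M ≤ N)
    (κ η : ℂ) (hκ : κ ≠ 0) (hη : η ≠ 0) (μ : Fin N → ℂ) (ν : Fin (N - M) → ℂ)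
    (hμ : Function.Injective μ) (hν : Function.Injective ν)
    (hgen : ∀ (i : Fin N) (j : Fin (N - M)), κ * η⁻¹ * μ i ≠ κ⁻¹ * ν j)
    (r : ℕ) (hr : r ≤ N) :
    ∑ I ∈ Finset.powersetCard r (Finset.univ : Finset (Fin N)),
      (∏ i ∈ I, ∏ j ∈ Iᶜ, (κ * η⁻¹ * μ i - η * κ⁻¹ * μ j) / (μ i - μ j)) *
        ∏ i ∈ I, ∏ j : Fin (N - M), (μ i - η⁻¹ * ν j) / (κ * η⁻¹ * μ i - κ⁻¹ * ν j) =
    ∑ s ∈ Finset.range (min r M + 1),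
      (∑ S ∈ Finset.powersetCard s (Finset.univ : Finset (Fin M)),
          ∏ t ∈ S, (κ * η⁻¹) ^ ((M : ℤ) - 1 - 2 * (t : ℕ))) *
        ∑ I ∈ Finset.powersetCard (r - s) (Finset.univ : Finset (Fin (N - M))),
          (∏ i ∈ I, ∏ j ∈ Iᶜ, (κ * η⁻¹ * ν j - η * κ⁻¹ * ν i) / (ν j - ν i)) *
            ∏ i ∈ I, ∏ j : Fin N, (μ j - η⁻¹ * ν i) / (κ * η⁻¹ * μ j - κ⁻¹ * ν i) := by
  obtain ⟨m, hm⟩ : ∃ m, m = N - M := ⟨_, rfl⟩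
  have hNm : N = m + M := by omega
  clear hr hN hM
  revert ν
  rw [← hm]
  subst hNm
  intro ν hν hgen
  have ha : κ * η⁻¹ ≠ 0 := mul_ne_zero hκ (inv_ne_zero hη)
  have hinv : η * κ⁻¹ = (κ * η⁻¹)⁻¹ := by rw [mul_inv, inv_inv, mul_comm]
  have hden : ∀ w, κ⁻¹ * w = (κ * η⁻¹)⁻¹ * (η⁻¹ * w) := fun w => by field_simp
  have h := BF.main (κ * η⁻¹) ha (fun k => η⁻¹ * ν k) μ hμ
    (fun i j hij => hν (mul_left_cancel₀ (inv_ne_zero hη) hij))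
    (fun i k => by rw [← hden]; exact hgen i k) r
  have hc : ∀ i j, (κ * η⁻¹ * ν j - (κ * η⁻¹)⁻¹ * ν i) / (ν j - ν i) =
      (κ * η⁻¹ * (η⁻¹ * ν j) - (κ * η⁻¹)⁻¹ * (η⁻¹ * ν i)) / (η⁻¹ * ν j - η⁻¹ * ν i) := by
    intro i j
    rw [← mul_div_mul_left _ _ (inv_ne_zero hη)]
    congr 1 <;> ring
  simp only [hden, hinv, hc]
  exact h
end

section
/- Let N ≥ 1 and let κ, η, q ∈ ℂ∖{0} with q = κ². Let K = ℂ(μ₁, …, μ_N) be the field of rational functions in N variables over ℂ. For I ⊆ {1,…,N} let σ_I : K → K be the ℂ-algebra automorphism determined by σ_I(μ_j) = q·μ_j for j ∈ I and σ_I(μ_j) = μ_j for j ∉ I, and let c_I := ∏_{i∈I, j∈{1,…,N}∖I} (κη⁻¹μ_i − ηκ⁻¹μ_j)/(μ_i − μ_j) ∈ K. For 0 ≤ r ≤ N define the ℂ-linear operator T_r : K → K by T_r(f) = Σ_{I ⊆ {1,…,N}, |I| = r} c_I · σ_I(f). Then T_r ∘ T_s = T_s ∘ T_r for all 0 ≤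 r, s ≤ N. -/
/-!
The product `T_r T_s` is a sum over pairs `(I, J)` with `|I| = r`, `|J| = s`. Group the pairs by
`P = I ∩ J` and `A = (I ∪ J) ∖ P`, so that `I = P ∪ S`, `J = P ∪ (A ∖ S)` with `S ⊆ A` of size
`k = r - |P|`. The shift `σ_I σ_J` depends only on `(P, A)`, and `c_I σ_I(c_J)` is a factor
depending only on `(P, A)` times `∏_{i ∈ S, j ∈ A ∖ S} w(μ_i, μ_j) w(μ_j, q μ_i)`, where
`w(y, z) = (α y - β z) / (y - z)` (`coeff_mul`, `fiber_sum`). Exchanging `r` and `s` replaces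
`k` by `|A| - k`, so commutativity reduces to the identity `F_k(A; q) = F_{|A|-k}(A; q)` for the
subset sums `mF`, which is `mF_symm`.

That identity is proved by Liouville-type reasoning in the variable `q`, by induction on `k`.
As functions of `q` both sides have at most simple poles, at the `n(n-1)` distinct points
`x_a / x_b` with `a ≠ b` in `A`, `n = |A|`. At `q = x_a / x_b` only subsets with `b ∈ S`, `a ∉ S`
contribute to the residue, and scale invariance of `w` makes the factors involving `a` or `b`
independent of `S`; the residue is a common factor times `F_{k-1}(A ∖ {a, b}; x_a / x_b)`
(`mP_eval_pole`), so the residues of the two sides agree by induction. At `q = 1` the two sides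
agree by complementation (`mF_one`). After clearing denominators, the difference is a polynomial
of degree at most `n(n-1)` with `n(n-1) + 1` distinct zeros, hence zero. Varying `q` rather than
one of the `x_i` keeps the poles distinct without any condition on `q` such as not being a root
of unity.
-/

/-- The field `ℂ(μ₁,…,μ_N)` of rational functions in `N` variables over `ℂ`. -/
abbrev RatK (N : ℕ) := FractionRing (MvPolynomial (Fin N) ℂ)

/-- The image of a complex scalar in `ℂ(μ₁,…,μ_N)`. -/
noncomputable def ratC {N : ℕ} (a : ℂ) : RatK N :=
  algebraMap (MvPolynomial (Fin N) ℂ) (RatK N) (MvPolynomial.C a)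

/-- The variable `μ_j` as an element of `ℂ(μ₁,…,μ_N)`. -/
noncomputable def ratMu {N : ℕ} (j : Fin N) : RatK N :=
  algebraMap (MvPolynomial (Fin N) ℂ) (RatK N) (MvPolynomial.X j)

/-- The Macdonald coefficient
`c_I = ∏_{i∈I, j∉I} (κη⁻¹μ_i − ηκ⁻¹μ_j)/(μ_i − μ_j) ∈ ℂ(μ₁,…,μ_N)`. -/
noncomputable def macdCoeff {N : ℕ} (κ η : ℂ) (I : Finset (Fin N)) : RatK N :=
  ∏ i ∈ I, ∏ j ∈ Iᶜ,
    (ratC κ * (ratC η)⁻¹ * ratMu i - ratC η * (ratC κ)⁻¹ * ratMu j) /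
      (ratMu i - ratMu j)

/-- The rank-`r` Macdonald (quantized trigonometric Ruijsenaars–Schneider)
difference operator `T_r(f) = Σ_{|I|=r} c_I · σ_I(f)`. -/
noncomputable def macdOp {N : ℕ} (κ η : ℂ) (σ : Finset (Fin N) → RatK N → RatK N)
    (r : ℕ) : RatK N → RatK N :=
  fun f => ∑ I ∈ Finset.powersetCard r (Finset.univ : Finset (Fin N)),
    macdCoeff κ η I * σ I f

open Finset Polynomial

/-! ### The subset-sum identity over a field -/

section SubsetIdentity

variable {L ι : Type*} [Field L]

/-- The scale-invariant function `w(y, z) = (α y - β z) / (y - z)` from which the Macdonald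
coefficients are built. -/
def mW (α β y z : L) : L := (α * y - β * z) / (y - z)

lemma mW_scale (α β : L) {c : L} (hc : c ≠ 0) (y z : L) :
    mW α β (c * y) (c * z) = mW α β y z := by
  unfold mW
  rw [← mul_div_mul_left (α * y - β * z) (y - z) hc]
  congr 1 <;> ring

/-- The numerator, as a polynomial in `q`, of the factor of `mF` indexed by `p`. -/
noncomputable def mNum (α β : L) (x : ι → L) (p : ι × ι) : L[X] :=
  C (mW α β (x p.1) (x p.2)) * (C (α * x p.2) - C (β * x p.1) * X)

/-- The denominator, as a polynomial in `q`, of the factor of `mF` indexed by `p`. -/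
noncomputable def mDen (x : ι → L) (p : ι × ι) : L[X] := C (x p.2) - C (x p.1) * X

lemma mNum_eval_div (α β : L) (x : ι → L) (q : L) (p : ι × ι) :
    (mNum α β x p).eval q / (mDen x p).eval q =
      mW α β (x p.1) (x p.2) * mW α β (x p.2) (q * x p.1) := by
  simp only [mNum, mDen, mW, eval_mul, eval_sub, eval_C, eval_X]
  rw [mul_div_assoc]
  congr 2 <;> ring

variable [DecidableEq ι]

/-- The subset sum `F_k(A; q) = ∑_{I ⊆ A, |I| = k} ∏_{i ∈ I, j ∈ A ∖ I} w(x_i, x_j) w(x_j, q x_i)`. -/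
def mF (α β : L) (x : ι → L) (q : L) (A : Finset ι) (k : ℕ) : L :=
  ∑ I ∈ A.powersetCard k, ∏ p ∈ I ×ˢ (A \ I),
    mW α β (x p.1) (x p.2) * mW α β (x p.2) (q * x p.1)

/-- The polynomial in `q` obtained from `F_k(A; q)` by multiplying with all the denominators
`x_j - q x_i`, `i ≠ j` in `A`. -/
noncomputable def mP (α β : L) (x : ι → L) (A : Finset ι) (k : ℕ) : L[X] :=
  ∑ I ∈ A.powersetCard k, (∏ p ∈ I ×ˢ (A \ I), mNum α β x p) *
    ∏ p ∈ A.offDiag \ I ×ˢ (A \ I), mDen x p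

lemma prod_sdiff_subset {I A : Finset ι} (h : I ⊆ A) : I ×ˢ (A \ I) ⊆ A.offDiag := by
  intro p hp
  simp only [mem_product, mem_sdiff, mem_offDiag] at hp ⊢
  exact ⟨h hp.1, hp.2.1, fun e => hp.2.2 (e ▸ hp.1)⟩

lemma mP_eval_of_ne (α β : L) (x : ι → L) (q : L) (A : Finset ι) (k : ℕ)
    (h : ∀ p ∈ A.offDiag, (mDen x p).eval q ≠ 0) :
    (mP α β x A k).eval q = mF α β x q A k * ∏ p ∈ A.offDiag, (mDen x p).eval q := by
  unfold mP mF
  rw [eval_finsetSum, sum_mul]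
  refine sum_congr rfl fun I hI => ?_
  have hs := prod_sdiff_subset (mem_powersetCard.1 hI).1
  rw [eval_mul, eval_prod, eval_prod, ← prod_sdiff hs, mul_comm (∏ p ∈ _ \ _, _), ← mul_assoc,
    ← prod_mul_distrib]
  congr 1
  refine prod_congr rfl fun p hp => ?_
  rw [← mNum_eval_div, div_mul_cancel₀ _ (h p (hs hp))]

lemma mP_natDegree_le (α β : L) (x : ι → L) (A : Finset ι) (k : ℕ) :
    (mP α β x A k).natDegree ≤ #A.offDiag := by
  unfold mP
  refine natDegree_sum_le_of_forall_le _ _ fun I hI => ?_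
  have hs := prod_sdiff_subset (mem_powersetCard.1 hI).1
  rw [← card_sdiff_add_card_eq_card hs, add_comm]
  refine natDegree_mul_le_of_le ?_ ?_
  · refine (natDegree_prod_le _ _).trans ?_
    rw [card_eq_sum_ones]
    refine sum_le_sum fun p _ => ?_
    unfold mNum
    compute_degree
  · refine (natDegree_prod_le _ _).trans ?_
    rw [card_eq_sum_ones]
    refine sum_le_sum fun p _ => ?_
    unfold mDen
    compute_degree

/-- At `q = 1` the weights are symmetric, so complementation of `I` exchanges the two sums. -/
lemma mF_one (α β : L) (x : ι → L) (A : Finset ι) (k m : ℕ) (hA : #A = k + m) :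
    mF α β x 1 A k = mF α β x 1 A m := by
  unfold mF
  refine sum_nbij' (fun I => A \ I) (fun I => A \ I) ?_ ?_ ?_ ?_ ?_
  · intro I hI
    rw [mem_powersetCard] at hI ⊢
    exact ⟨sdiff_subset, by rw [card_sdiff_of_subset hI.1]; omega⟩
  · intro I hI
    rw [mem_powersetCard] at hI ⊢
    exact ⟨sdiff_subset, by rw [card_sdiff_of_subset hI.1]; omega⟩
  · intro I hI
    exact Finset.sdiff_sdiff_eq_self (mem_powersetCard.1 hI).1
  · intro I hI
    exact Finset.sdiff_sdiff_eq_self (mem_powersetCard.1 hI).1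
  · intro I hI
    rw [Finset.sdiff_sdiff_eq_self (mem_powersetCard.1 hI).1, prod_product, prod_product_right]
    refine prod_congr rfl fun i _ => prod_congr rfl fun j _ => ?_
    simp only [one_mul]
    exact mul_comm _ _

/-- The residue computation: at the simple pole `q = x_a / x_b` only the subsets containing `b` but
not `a` survive, and the factors involving `a` or `b` do not depend on the subset. -/
lemma mP_eval_pole (α β : L) (x : ι → L) (A : Finset ι) (k : ℕ) {a b : ι}
    (ha : a ∈ A) (hb : b ∈ A) (hab : a ≠ b) (hx : ∀ i ∈ A, x i ≠ 0)
    (h : ∀ p ∈ A.offDiag, p ≠ (b, a) → (mDen x p).eval (x a / x b) ≠ 0) :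
    (mP α β x A (k + 1)).eval (x a / x b) =
      (mNum α β x (b, a)).eval (x a / x b) *
        (∏ p ∈ A.offDiag.erase (b, a), (mDen x p).eval (x a / x b)) *
        (∏ c ∈ (A.erase a).erase b, mW α β (x b) (x c) * mW α β (x c) (x a / x b * x b)) *
        mF α β x (x a / x b) ((A.erase a).erase b) k := by
  set q := x a / x b with hq
  set B := (A.erase a).erase b with hB
  have hqb : q * x b = x a := div_mul_cancel₀ _ (hx b hb)
  have hq0 : q ≠ 0 := div_ne_zero (hx a ha) (hx b hb)
  have hden : (mDen x (b, a)).eval q = 0 := by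
    simp only [mDen, eval_sub, eval_C, eval_mul, eval_X]
    rw [mul_comm, hqb, sub_self]
  have hbB : b ∉ B := by simp [hB]
  have haB : a ∉ B := by simp [hB]
  have hBA : B ⊆ A := (erase_subset _ _).trans (erase_subset _ _)
  unfold mP mF
  rw [eval_finsetSum, mul_sum]
  symm
  refine sum_of_injOn (fun I => insert b I) ?_ ?_ ?_ ?_
  · intro I hI J hJ hIJ
    have hI' := (mem_powersetCard.1 (mem_coe.1 hI)).1
    have hJ' := (mem_powersetCard.1 (mem_coe.1 hJ)).1
    have := congrArg (fun S => erase S b) hIJ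
    simpa [erase_insert (fun h => hbB (hI' h)), erase_insert (fun h => hbB (hJ' h))] using this
  · intro I hI
    obtain ⟨hI, hc⟩ := mem_powersetCard.1 (mem_coe.1 hI)
    rw [mem_coe, mem_powersetCard]
    refine ⟨insert_subset hb (hI.trans hBA), ?_⟩
    rw [card_insert_of_notMem (fun h => hbB (hI h)), hc]
  · intro I hI hnot
    obtain ⟨hI, hc⟩ := mem_powersetCard.1 hI
    rw [eval_mul, eval_prod _ _ q, eval_prod _ _ q]
    refine mul_eq_zero_of_right _ (prod_eq_zero (i := (b, a)) ?_ hden)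
    simp only [mem_sdiff, mem_offDiag, mem_product]
    refine ⟨⟨hb, ha, hab.symm⟩, ?_⟩
    rintro ⟨hbI, -, haI⟩
    refine hnot ⟨I.erase b, ?_, insert_erase hbI⟩
    rw [mem_coe, mem_powersetCard]
    refine ⟨fun i hi => ?_, by rw [card_erase_of_mem hbI, hc]; rfl⟩
    rw [mem_erase] at hi
    rw [hB, mem_erase, mem_erase]
    exact ⟨hi.1, fun e => haI (e ▸ hi.2), hI hi.2⟩
  · intro I hI
    obtain ⟨hI, -⟩ := mem_powersetCard.1 hI
    have hbI : b ∉ I := fun h => hbB (hI h)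
    have haI : a ∉ I := fun h => haB (hI h)
    have hsub : insert b I ⊆ A := insert_subset hb (hI.trans hBA)
    have hs := prod_sdiff_subset hsub
    have hcompl : A \ insert b I = insert a (B \ I) := by
      ext i
      simp only [hB, mem_sdiff, mem_insert, mem_erase]
      by_cases h1 : i = a
      · subst h1; simp [ha, hab, haI]
      · simp [h1]; tauto
    have hba : (b, a) ∈ insert b I ×ˢ (A \ insert b I) := by
      simp [ha, hab, haI]
    have hs' : (insert b I ×ˢ (A \ insert b I)).erase (b, a) ⊆ A.offDiag.erase (b, a) :=
      erase_subset_erase _ hs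
    have hrest : A.offDiag \ insert b I ×ˢ (A \ insert b I) =
        A.offDiag.erase (b, a) \ (insert b I ×ˢ (A \ insert b I)).erase (b, a) := by
      ext p
      simp only [mem_sdiff, mem_erase]
      by_cases hp : p = (b, a)
      · subst hp; simp only [hba]; simp
      · simp [hp]
    -- The factors other than the `(b, a)` one, with denominators restored.
    have key : ∏ p ∈ (insert b I ×ˢ (A \ insert b I)).erase (b, a),
          mW α β (x p.1) (x p.2) * mW α β (x p.2) (q * x p.1) =
        (∏ c ∈ B, mW α β (x b) (x c) * mW α β (x c) (q * x b)) *
          ∏ p ∈ I ×ˢ (B \ I), mW α β (x p.1) (x p.2) * mW α β (x p.2) (q * x p.1) := by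
      have hset : (insert b I ×ˢ (A \ insert b I)).erase (b, a) =
          (({b} : Finset ι) ×ˢ (B \ I)) ∪ ((I ×ˢ ({a} : Finset ι)) ∪ I ×ˢ (B \ I)) := by
        rw [hcompl]
        ext ⟨i, j⟩
        simp only [mem_erase, mem_product, mem_insert, mem_union, mem_singleton, ne_eq,
          Prod.mk.injEq]
        have : i = b → i ∉ I := fun e => e ▸ hbI
        have : j = a → j ∉ B \ I := fun e => e ▸ fun h => haB (mem_sdiff.1 h).1
        tauto
      have hd1 : Disjoint (({b} : Finset ι) ×ˢ (B \ I))
          ((I ×ˢ ({a} : Finset ι)) ∪ I ×ˢ (B \ I)) := by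
        rw [Finset.disjoint_left]
        rintro ⟨i, j⟩ h1 h2
        simp only [mem_product, mem_union, mem_singleton] at h1 h2
        exact hbI (h1.1 ▸ by tauto)
      have hd2 : Disjoint (I ×ˢ ({a} : Finset ι)) (I ×ˢ (B \ I)) := by
        rw [Finset.disjoint_left]
        rintro ⟨i, j⟩ h1 h2
        simp only [mem_product, mem_singleton] at h1 h2
        exact haB (h1.2 ▸ (mem_sdiff.1 h2.2).1)
      rw [hset, prod_union hd1, prod_union hd2, ← mul_assoc]
      congr 1
      rw [prod_product, prod_product, prod_singleton, ← prod_sdiff hI]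
      congr 1
      refine prod_congr rfl fun i _ => ?_
      rw [prod_singleton]
      simp only
      rw [← hqb, mW_scale α β hq0, mul_comm]
    have hkey2 : ∏ p ∈ (insert b I ×ˢ (A \ insert b I)).erase (b, a), (mNum α β x p).eval q =
        (∏ p ∈ (insert b I ×ˢ (A \ insert b I)).erase (b, a),
          mW α β (x p.1) (x p.2) * mW α β (x p.2) (q * x p.1)) *
        ∏ p ∈ (insert b I ×ˢ (A \ insert b I)).erase (b, a), (mDen x p).eval q := by
      rw [← prod_mul_distrib]
      refine prod_congr rfl fun p hp => ?_
      rw [← mNum_eval_div, div_mul_cancel₀]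
      have := mem_erase.1 (hs' hp)
      exact h p this.2 this.1
    rw [eval_mul, eval_prod _ _ q, eval_prod _ _ q, ← mul_prod_erase _ _ hba, hkey2, key, hrest,
      ← prod_sdiff hs']
    ring

/-- The identity `F_k(A; q) = F_m(A; q)` for `k + m = |A|`, away from the poles, when the points
`x_j / x_i` for distinct `i, j ∈ A` are pairwise distinct and different from `1`. -/
theorem mF_symm (α β : L) (x : ι → L) (k : ℕ) : ∀ (m : ℕ) (A : Finset ι) (q : L),
    #A = k + m → (∀ i ∈ A, x i ≠ 0) →
    (∀ p ∈ A.offDiag, ∀ p' ∈ A.offDiag, x p.2 * x p'.1 = x p'.2 * x p.1 → p = p') →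
    (∀ i ∈ A, ∀ j ∈ A, i ≠ j → x i ≠ x j) →
    (∀ p ∈ A.offDiag, x p.2 ≠ q * x p.1) →
    mF α β x q A k = mF α β x q A m := by
  classical
  have edge : ∀ (A : Finset ι) (q : L), mF α β x q A 0 = mF α β x q A #A := by
    intro A q
    simp [mF]
  induction k with
  | zero =>
    intro m A q hA _ _ _ _
    rw [edge, hA, zero_add]
  | succ k ih =>
    intro m A q hA hx0 hratio hinj hq
    rcases m with _ | m
    · rw [edge, hA, add_zero]
    have hden : ∀ p ∈ A.offDiag, (mDen x p).eval q ≠ 0 := by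
      intro p hp
      simp only [mDen, eval_sub, eval_C, eval_mul, eval_X]
      rw [mul_comm]
      exact sub_ne_zero.2 (hq p hp)
    have hroots_inj : Set.InjOn (fun p : ι × ι => x p.2 / x p.1) (A.offDiag : Set (ι × ι)) := by
      intro p hp p' hp' e
      have h1 := mem_offDiag.1 (mem_coe.1 hp)
      have h2 := mem_offDiag.1 (mem_coe.1 hp')
      refine hratio p hp p' hp' ?_
      exact (div_eq_div_iff (hx0 _ h1.1) (hx0 _ h2.1)).1 e
    have hone : (1 : L) ∉ A.offDiag.image (fun p : ι × ι => x p.2 / x p.1) := by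
      intro h
      obtain ⟨p, hp, e⟩ := mem_image.1 h
      have h1 := mem_offDiag.1 hp
      rw [div_eq_one_iff_eq (hx0 _ h1.1)] at e
      exact hinj _ h1.2.1 _ h1.1 (Ne.symm h1.2.2) e
    have hpoly : mP α β x A (k + 1) = mP α β x A (m + 1) := by
      rw [← sub_eq_zero]
      refine eq_zero_of_natDegree_lt_card_of_eval_eq_zero' _
        (insert 1 (A.offDiag.image (fun p : ι × ι => x p.2 / x p.1))) ?_ ?_
      · intro y hy
        rw [eval_sub, sub_eq_zero]
        rcases mem_insert.1 hy with rfl | hy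
        · have h1 : ∀ p ∈ A.offDiag, (mDen x p).eval 1 ≠ 0 := by
            intro p hp
            have h1 := mem_offDiag.1 hp
            simp only [mDen, eval_sub, eval_C, eval_mul, eval_X, mul_one]
            exact sub_ne_zero.2 (hinj _ h1.2.1 _ h1.1 (Ne.symm h1.2.2))
          rw [mP_eval_of_ne _ _ _ _ _ _ h1, mP_eval_of_ne _ _ _ _ _ _ h1,
            mF_one α β x A _ _ hA]
        · obtain ⟨⟨b, a⟩, hp, rfl⟩ := mem_image.1 hy
          obtain ⟨hb, ha, hba⟩ := mem_offDiag.1 hp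
          simp only at hb ha hba ⊢
          have hne : ∀ p ∈ A.offDiag, p ≠ (b, a) → x p.2 ≠ x a / x b * x p.1 := by
            intro p hp' hpne e
            refine hpne (hratio p hp' (b, a) hp ?_)
            simp only
            rw [e]
            field_simp [hx0 b hb]
          have hd : ∀ p ∈ A.offDiag, p ≠ (b, a) → (mDen x p).eval (x a / x b) ≠ 0 := by
            intro p hp' hpne
            simp only [mDen, eval_sub, eval_C, eval_mul, eval_X]
            rw [mul_comm]
            exact sub_ne_zero.2 (hne p hp' hpne)
          have hBA : (A.erase a).erase b ⊆ A := (erase_subset _ _).trans (erase_subset _ _)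
          have hoff : ((A.erase a).erase b).offDiag ⊆ A.offDiag := offDiag_mono hBA
          rw [mP_eval_pole α β x A k ha hb hba.symm hx0 hd,
            mP_eval_pole α β x A m ha hb hba.symm hx0 hd,
            ih m ((A.erase a).erase b) (x a / x b) ?_ (fun i hi => hx0 i (hBA hi))
              (fun p hp p' hp' => hratio p (hoff hp) p' (hoff hp'))
              (fun i hi j hj => hinj i (hBA hi) j (hBA hj)) ?_]
          · rw [card_erase_of_mem (mem_erase.2 ⟨hba, hb⟩), card_erase_of_mem ha]
            omega
          · intro p hp'
            refine hne p (hoff hp') ?_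
            rintro rfl
            simp at hp'
      · rw [card_insert_of_notMem hone, card_image_of_injOn hroots_inj]
        refine Nat.lt_succ_of_le ((natDegree_sub_le _ _).trans ?_)
        exact max_le (mP_natDegree_le _ _ _ _ _) (mP_natDegree_le _ _ _ _ _)
    have h := congrArg (eval q) hpoly
    rw [mP_eval_of_ne _ _ _ _ _ _ hden, mP_eval_of_ne _ _ _ _ _ _ hden] at h
    exact mul_right_cancel₀ (prod_ne_zero_iff.2 hden) h

end SubsetIdentity

/-! ### The field of rational functions and its automorphisms -/

section Commutation

variable {N : ℕ}

lemma ratK_algebraMap_inj {P Q : MvPolynomial (Fin N) ℂ}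
    (h : algebraMap _ (RatK N) P = algebraMap _ (RatK N) Q) : P = Q :=
  IsFractionRing.injective (MvPolynomial (Fin N) ℂ) (RatK N) h

lemma ratMu_ne_zero (i : Fin N) : (ratMu i : RatK N) ≠ 0 := by
  intro h
  have := ratK_algebraMap_inj (Q := 0) (h.trans (map_zero _).symm)
  exact MvPolynomial.X_ne_zero i this

/-- The ratios `μ_j / μ_i` with `i ≠ j` are pairwise distinct. The proof evaluates the polynomial
identity at points with a single vanishing coordinate. -/
lemma ratMu_ratio (p p' : Fin N × Fin N) (hp : p.1 ≠ p.2) (hp' : p'.1 ≠ p'.2)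
    (h : (ratMu p.2 : RatK N) * ratMu p'.1 = ratMu p'.2 * ratMu p.1) : p = p' := by
  unfold ratMu at h
  rw [← map_mul, ← map_mul] at h
  have h := ratK_algebraMap_inj h
  have ev : ∀ f : Fin N → ℂ, f p.2 * f p'.1 = f p'.2 * f p.1 := fun f => by
    simpa using congrArg (MvPolynomial.eval f) h
  have h2 : p.2 = p'.2 := by
    by_contra hne
    have := ev (fun i => if i = p.2 then 0 else 1)
    simp [hp, Ne.symm hne] at this
  have h1 : p.1 = p'.1 := by
    by_contra hne
    have := ev (fun i => if i = p'.1 then 0 else 1)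
    simp [Ne.symm hp', hne] at this
  exact Prod.ext h1 h2

lemma ratMu_ne_smul (c : ℂ) {i j : Fin N} (hij : i ≠ j) :
    (ratMu j : RatK N) ≠ ratC c * ratMu i := by
  intro h
  unfold ratMu ratC at h
  rw [← map_mul] at h
  have h := congrArg (MvPolynomial.eval (fun l => if l = i then (0 : ℂ) else 1))
    (ratK_algebraMap_inj h)
  simp [hij.symm] at h

lemma ratC_one : (ratC 1 : RatK N) = 1 := by simp [ratC]

lemma ratC_ne_zero {c : ℂ} (hc : c ≠ 0) : (ratC c : RatK N) ≠ 0 := by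
  intro h
  have := ratK_algebraMap_inj (Q := 0) (h.trans (map_zero _).symm)
  exact hc (by simpa using this)

lemma ratC_fixed (τ : RatK N →ₐ[ℂ] RatK N) (c : ℂ) : τ (ratC c) = ratC c := by
  have : (ratC c : RatK N) = algebraMap ℂ (RatK N) c := by
    rw [IsScalarTower.algebraMap_apply ℂ (MvPolynomial (Fin N) ℂ) (RatK N)]
    rfl
  rw [this, τ.commutes]

/-- A `ℂ`-algebra endomorphism of `ℂ(μ₁,…,μ_N)` is determined by its values on the variables. -/
lemma ratK_hom_ext (τ ρ : RatK N →ₐ[ℂ] RatK N) (h : ∀ j, τ (ratMu j) = ρ (ratMu j))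
    (f : RatK N) : τ f = ρ f := by
  have hpoly : ∀ P : MvPolynomial (Fin N) ℂ,
      τ (algebraMap _ (RatK N) P) = ρ (algebraMap _ (RatK N) P) := by
    intro P
    have : τ.comp (IsScalarTower.toAlgHom ℂ (MvPolynomial (Fin N) ℂ) (RatK N)) =
        ρ.comp (IsScalarTower.toAlgHom ℂ (MvPolynomial (Fin N) ℂ) (RatK N)) :=
      MvPolynomial.algHom_ext fun j => h j
    exact DFunLike.congr_fun this P
  obtain ⟨P, Q, -, rfl⟩ := IsFractionRing.div_surjective (A := MvPolynomial (Fin N) ℂ) f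
  rw [map_div₀, map_div₀, hpoly, hpoly]

lemma map_mW (τ : RatK N →ₐ[ℂ] RatK N) (κ η : ℂ) (y z : RatK N) :
    τ (mW (ratC κ * (ratC η)⁻¹) (ratC η * (ratC κ)⁻¹) y z) =
      mW (ratC κ * (ratC η)⁻¹) (ratC η * (ratC κ)⁻¹) (τ y) (τ z) := by
  simp [mW, ratC_fixed]

/-! ### Coefficients of the product of two operators -/

/-- The coefficient `c_I σ_I(c_J)` for `I = P ∪ S`, `J = P ∪ R`, where `A = S ∪ R` is disjoint
from `P`: a factor depending only on `P` and `A`, times the summand of `mF` at `S ⊆ A`. -/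
lemma coeff_mul (κ η q : ℂ) (hq0 : q ≠ 0) (τ : RatK N →ₐ[ℂ] RatK N) (P A S : Finset (Fin N))
    (hPA : Disjoint P A) (hS : S ⊆ A)
    (hτ : ∀ j, τ (ratMu j) = (if j ∈ P ∪ S then ratC q else 1) * ratMu j) :
    macdCoeff κ η (P ∪ S) * τ (macdCoeff κ η (P ∪ (A \ S))) =
      ((∏ i ∈ P, ∏ j ∈ A, mW (ratC κ * (ratC η)⁻¹) (ratC η * (ratC κ)⁻¹) (ratMu i) (ratMu j)) *
      (∏ i ∈ P, ∏ j ∈ (P ∪ A)ᶜ,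
        mW (ratC κ * (ratC η)⁻¹) (ratC η * (ratC κ)⁻¹) (ratMu i) (ratMu j) *
        mW (ratC κ * (ratC η)⁻¹) (ratC η * (ratC κ)⁻¹) (ratC q * ratMu i) (ratMu j)) *
      (∏ i ∈ A, ∏ j ∈ (P ∪ A)ᶜ,
        mW (ratC κ * (ratC η)⁻¹) (ratC η * (ratC κ)⁻¹) (ratMu i) (ratMu j))) *
      ∏ p ∈ S ×ˢ (A \ S),
        mW (ratC κ * (ratC η)⁻¹) (ratC η * (ratC κ)⁻¹) (ratMu p.1 : RatK N) (ratMu p.2) *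
        mW (ratC κ * (ratC η)⁻¹) (ratC η * (ratC κ)⁻¹) (ratMu p.2) (ratC q * ratMu p.1) := by
  have hc : ∀ I : Finset (Fin N), macdCoeff κ η I = ∏ i ∈ I, ∏ j ∈ Iᶜ,
      mW (ratC κ * (ratC η)⁻¹) (ratC η * (ratC κ)⁻¹) (ratMu i) (ratMu j) := fun _ => rfl
  simp only [hc, map_prod, map_mW]
  generalize (ratC κ * (ratC η)⁻¹ : RatK N) = α
  generalize (ratC η * (ratC κ)⁻¹ : RatK N) = β
  have hqK : (ratC q : RatK N) ≠ 0 := ratC_ne_zero hq0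
  generalize (ratC q : RatK N) = Q at hqK hτ ⊢
  generalize hR : A \ S = R
  generalize hD : (P ∪ A)ᶜ = D
  have hSR : S ∪ R = A := by rw [← hR, union_sdiff_of_subset hS]
  have dPA : ∀ i ∈ P, i ∉ A := fun i h1 h2 => Finset.disjoint_left.1 hPA h1 h2
  have dSR : Disjoint S R := by rw [← hR]; exact disjoint_sdiff
  have dPS : Disjoint P S := hPA.mono_right hS
  have dPR : Disjoint P R := hPA.mono_right (hSR ▸ subset_union_right)
  have hI : (P ∪ S)ᶜ = R ∪ D := by
    ext i
    have := dPA i; have := @hS i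
    simp only [← hR, ← hD, mem_compl, mem_union, mem_sdiff]; tauto
  have hJ : (P ∪ R)ᶜ = S ∪ D := by
    ext i
    have := dPA i; have := @hS i
    simp only [← hR, ← hD, mem_compl, mem_union, mem_sdiff]; tauto
  have dRD : Disjoint R D := by
    rw [← hD, ← hSR, Finset.disjoint_left]; intro i hi; simp [hi]
  have dSD : Disjoint S D := by
    rw [← hD, ← hSR, Finset.disjoint_left]; intro i hi; simp [hi]
  have tP : ∀ i ∈ P, τ (ratMu i) = Q * ratMu i := fun i hi => by simp [hτ, hi]
  have tS : ∀ i ∈ S, τ (ratMu i) = Q * ratMu i := fun i hi => by simp [hτ, hi]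
  have tR : ∀ i ∈ R, τ (ratMu i) = ratMu i := fun i hi => by
    have h1 : i ∉ P := fun h => Finset.disjoint_left.1 dPR h hi
    have h2 : i ∉ S := fun h => Finset.disjoint_left.1 dSR h hi
    simp [hτ, h1, h2]
  have tD : ∀ i ∈ D, τ (ratMu i) = ratMu i := fun i hi => by
    have h1 : i ∉ P := fun h => by simp [← hD, h] at hi
    have h2 : i ∉ S := fun h => Finset.disjoint_left.1 dSD h hi
    simp [hτ, h1, h2]
  rw [hI, hJ]
  have ePS : ∏ i ∈ P, ∏ j ∈ S, mW α β (τ (ratMu i)) (τ (ratMu j)) =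
      ∏ i ∈ P, ∏ j ∈ S, mW α β (ratMu i) (ratMu j) :=
    prod_congr rfl fun i hi => prod_congr rfl fun j hj => by
      rw [tP i hi, tS j hj, mW_scale α β hqK]
  have ePD : ∏ i ∈ P, ∏ j ∈ D, mW α β (τ (ratMu i)) (τ (ratMu j)) =
      ∏ i ∈ P, ∏ j ∈ D, mW α β (Q * ratMu i) (ratMu j) :=
    prod_congr rfl fun i hi => prod_congr rfl fun j hj => by rw [tP i hi, tD j hj]
  have eRD : ∏ i ∈ R, ∏ j ∈ D, mW α β (τ (ratMu i)) (τ (ratMu j)) =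
      ∏ i ∈ R, ∏ j ∈ D, mW α β (ratMu i) (ratMu j) :=
    prod_congr rfl fun i hi => prod_congr rfl fun j hj => by rw [tR i hi, tD j hj]
  have eRS : ∏ i ∈ R, ∏ j ∈ S, mW α β (τ (ratMu i)) (τ (ratMu j)) =
      ∏ i ∈ S, ∏ j ∈ R, mW α β (ratMu j) (Q * ratMu i) := by
    rw [prod_comm]
    exact prod_congr rfl fun i hi => prod_congr rfl fun j hj => by rw [tS i hi, tR j hj]
  simp only [← hSR, prod_product, prod_union dPS, prod_union dPR, prod_union dSR,
    prod_union dRD, prod_union dSD, prod_mul_distrib, ePS, ePD, eRD, eRS]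
  ring

/-- The contribution to `T_r T_s f` of the pairs `(I, J)` with given intersection `P` and union
`P ∪ A`. The reference pair `(I₀, J₀)` only serves to name the common shift `σ_I σ_J`, so the right
side depends on `r` and `s` only through the index `k` of `mF`. -/
lemma fiber_sum (κ η q : ℂ) (hq0 : q ≠ 0) (σ : Finset (Fin N) → (RatK N ≃ₐ[ℂ] RatK N))
    (hσX : ∀ (I : Finset (Fin N)) (j : Fin N),
      σ I (ratMu j) = (if j ∈ I then ratC q else 1) * ratMu j)
    (f : RatK N) (P A I₀ J₀ : Finset (Fin N)) (hPA : Disjoint P A) (k m r s : ℕ)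
    (hr : #P + k = r) (hA : #A = k + m) (hs : #P + m = s)
    (hI₀ : I₀ ∩ J₀ = P) (hJ₀ : I₀ ∪ J₀ = P ∪ A) :
    ∑ p ∈ (powersetCard r univ ×ˢ powersetCard s univ).filter
        (fun p => (p.1 ∩ p.2, p.1 ∪ p.2) = (P, P ∪ A)),
      macdCoeff κ η p.1 * σ p.1 (macdCoeff κ η p.2 * σ p.2 f) =
    ((∏ i ∈ P, ∏ j ∈ A, mW (ratC κ * (ratC η)⁻¹) (ratC η * (ratC κ)⁻¹) (ratMu i) (ratMu j)) *
      (∏ i ∈ P, ∏ j ∈ (P ∪ A)ᶜ,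
        mW (ratC κ * (ratC η)⁻¹) (ratC η * (ratC κ)⁻¹) (ratMu i) (ratMu j) *
        mW (ratC κ * (ratC η)⁻¹) (ratC η * (ratC κ)⁻¹) (ratC q * ratMu i) (ratMu j)) *
      (∏ i ∈ A, ∏ j ∈ (P ∪ A)ᶜ,
        mW (ratC κ * (ratC η)⁻¹) (ratC η * (ratC κ)⁻¹) (ratMu i) (ratMu j))) *
      σ I₀ (σ J₀ f) *
      mF (ratC κ * (ratC η)⁻¹) (ratC η * (ratC κ)⁻¹) (fun i => (ratMu i : RatK N)) (ratC q) A k := by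
  have dPA : ∀ i ∈ P, i ∉ A := fun i h1 h2 => Finset.disjoint_left.1 hPA h1 h2
  unfold mF
  rw [mul_sum]
  symm
  refine sum_nbij' (fun S => (P ∪ S, P ∪ (A \ S))) (fun p => p.1 \ P) ?_ ?_ ?_ ?_ ?_
  · intro S hS
    obtain ⟨hS, hc⟩ := mem_powersetCard.1 hS
    have h1 : #(P ∪ S) = r := by
      rw [card_union_of_disjoint (hPA.mono_right hS), hc, hr]
    have h2 : #(P ∪ (A \ S)) = s := by
      rw [card_union_of_disjoint (hPA.mono_right sdiff_subset), card_sdiff_of_subset hS]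
      omega
    simp only [mem_filter, mem_product, mem_powersetCard, subset_univ, true_and, h1, h2,
      Prod.mk.injEq]
    constructor
    · ext i; have := dPA i; simp only [mem_inter, mem_union, mem_sdiff]; tauto
    · ext i; have := @hS i; simp only [mem_union, mem_sdiff]; tauto
  · rintro ⟨I, J⟩ h
    simp only [mem_filter, mem_product, mem_powersetCard, subset_univ, true_and,
      Prod.mk.injEq] at h ⊢
    obtain ⟨⟨h1, h2⟩, h3, h4⟩ := h
    have hPI : P ⊆ I := h3 ▸ inter_subset_left
    refine ⟨fun i hi => ?_, by rw [card_sdiff_of_subset hPI]; omega⟩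
    rw [mem_sdiff] at hi
    have : i ∈ P ∪ A := h4 ▸ mem_union_left _ hi.1
    exact (mem_union.1 this).resolve_left hi.2
  · intro S hS
    obtain ⟨hS, hc⟩ := mem_powersetCard.1 hS
    ext i; have := dPA i; have := @hS i; simp only [mem_union, mem_sdiff]; tauto
  · rintro ⟨I, J⟩ h
    simp only [mem_filter, mem_product, mem_powersetCard, subset_univ, true_and,
      Prod.mk.injEq] at h ⊢
    obtain ⟨-, h3, h4⟩ := h
    constructor <;>
    · ext i
      have e1 := Finset.ext_iff.1 h3 i
      have e2 := Finset.ext_iff.1 h4 i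
      have := dPA i
      simp only [mem_union, mem_sdiff, mem_inter] at e1 e2 ⊢
      tauto
  · intro S hS
    obtain ⟨hS, hc⟩ := mem_powersetCard.1 hS
    have hcoef := coeff_mul κ η q hq0 (σ (P ∪ S) : RatK N →ₐ[ℂ] RatK N) P A S hPA hS
      (fun j => hσX _ j)
    have hshift : σ (P ∪ S) (σ (P ∪ (A \ S)) f) = σ I₀ (σ J₀ f) := by
      refine ratK_hom_ext ((σ (P ∪ S) : RatK N →ₐ[ℂ] RatK N).comp (σ (P ∪ (A \ S))))
        ((σ I₀ : RatK N →ₐ[ℂ] RatK N).comp (σ J₀)) (fun j => ?_) f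
      have hfix : ∀ I : Finset (Fin N), σ I (ratC q) = ratC q :=
        fun I => ratC_fixed (σ I : RatK N →ₐ[ℂ] RatK N) q
      have comp : ∀ I J : Finset (Fin N), σ I (σ J (ratMu j)) =
          (if j ∈ I ∪ J then ratC q else 1) * ((if j ∈ I ∩ J then ratC q else 1) * ratMu j) := by
        intro I J
        rw [hσX J, map_mul, hσX I, apply_ite (σ I), hfix, map_one]
        by_cases h1 : j ∈ I <;> by_cases h2 : j ∈ J <;> simp [h1, h2]
      have e1 : (P ∪ S) ∪ (P ∪ (A \ S)) = I₀ ∪ J₀ := by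
        rw [hJ₀]
        ext i; have := @hS i; simp only [mem_union, mem_sdiff]; tauto
      have e2 : (P ∪ S) ∩ (P ∪ (A \ S)) = I₀ ∩ J₀ := by
        rw [hI₀]
        ext i; have := dPA i; simp only [mem_inter, mem_union, mem_sdiff]; tauto
      change σ (P ∪ S) (σ (P ∪ (A \ S)) (ratMu j)) = σ I₀ (σ J₀ (ratMu j))
      rw [comp, comp, e1, e2]
    simp only
    rw [map_mul, hshift, ← mul_assoc]
    refine Eq.trans ?_ (congrArg (· * σ I₀ (σ J₀ f)) hcoef.symm)
    ring

end Commutation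

/-- The Macdonald difference operators `T_r` pairwise commute: here `σ I` is the
ℂ-algebra automorphism of `ℂ(μ₁,…,μ_N)` determined by `μ_j ↦ q μ_j` for `j ∈ I`
and `μ_j ↦ μ_j` for `j ∉ I`, with `q = κ²`. -/
theorem macdonald_operators_commute (N : ℕ) (hN : 1 ≤ N) (κ η q : ℂ)
    (hκ : κ ≠ 0) (hη : η ≠ 0) (hq0 : q ≠ 0) (hq : q = κ ^ 2)
    (σ : Finset (Fin N) → (RatK N ≃ₐ[ℂ] RatK N))
    (hσX : ∀ (I : Finset (Fin N)) (j : Fin N),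
      σ I (ratMu j) = (if j ∈ I then ratC q else 1) * ratMu j)
    (r s : ℕ) (hr : r ≤ N) (hs : s ≤ N) :
    macdOp κ η (fun I => ⇑(σ I)) r ∘ macdOp κ η (fun I => ⇑(σ I)) s =
      macdOp κ η (fun I => ⇑(σ I)) s ∘ macdOp κ η (fun I => ⇑(σ I)) r := by
  funext f
  have expand : ∀ r s : ℕ,
      (macdOp κ η (fun I => ⇑(σ I)) r ∘ macdOp κ η (fun I => ⇑(σ I)) s) f =
      ∑ y : Finset (Fin N) × Finset (Fin N),
        ∑ p ∈ (powersetCard r univ ×ˢ powersetCard s univ).filter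
          (fun p => (p.1 ∩ p.2, p.1 ∪ p.2) = y),
        macdCoeff κ η p.1 * σ p.1 (macdCoeff κ η p.2 * σ p.2 f) := by
    intro r s
    rw [sum_fiberwise, sum_product]
    simp only [Function.comp_apply, macdOp, map_sum, mul_sum]
  rw [expand, expand]
  refine sum_congr rfl ?_
  rintro ⟨P, U⟩ -
  by_cases hne : ∃ I J : Finset (Fin N), #I = r ∧ #J = s ∧ I ∩ J = P ∧ I ∪ J = U
  · obtain ⟨I, J, hI, hJ, hP, hU⟩ := hne
    have hPU : P ⊆ U := hP ▸ hU ▸ inter_subset_union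
    obtain ⟨A, hA⟩ : ∃ A, A = U \ P := ⟨_, rfl⟩
    have hPA : Disjoint P A := hA ▸ disjoint_sdiff
    have hUA : U = P ∪ A := by rw [hA, union_sdiff_of_subset hPU]
    have hPI : #P ≤ #I := card_le_card (hP ▸ inter_subset_left)
    have hPJ : #P ≤ #J := card_le_card (hP ▸ inter_subset_right)
    have hcard : #U + #P = #I + #J := by rw [← hU, ← hP, card_union_add_card_inter]
    have hcA : #A = (r - #P) + (s - #P) := by
      rw [hA, card_sdiff_of_subset hPU]; omega
    rw [hUA] at hU ⊢
    rw [fiber_sum κ η q hq0 σ hσX f P A I J hPA (r - #P) (s - #P) r s (by omega) hcA (by omega)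
        hP hU,
      fiber_sum κ η q hq0 σ hσX f P A I J hPA (s - #P) (r - #P) s r (by omega)
        (by omega) (by omega) hP hU]
    congr 1
    refine mF_symm _ _ _ _ _ _ _ hcA (fun i _ => ratMu_ne_zero i) ?_ ?_ ?_
    · intro p hp p' hp' h
      exact ratMu_ratio p p' (mem_offDiag.1 hp).2.2 (mem_offDiag.1 hp').2.2 h
    · intro i _ j _ hij h
      refine ratMu_ne_smul 1 hij.symm ?_
      rw [ratC_one, one_mul]
      exact h
    · intro p hp
      exact ratMu_ne_smul q (mem_offDiag.1 hp).2.2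
  -- No pair has this intersection and union, and the same holds for the swapped pairs.
  · rw [filter_false_of_mem, filter_false_of_mem]
    · rintro ⟨I, J⟩ h e
      simp only [mem_product, mem_powersetCard, subset_univ, true_and, Prod.mk.injEq] at h e
      exact hne ⟨J, I, h.2, h.1, by rw [inter_comm]; exact e.1, by rw [union_comm]; exact e.2⟩
    · rintro ⟨I, J⟩ h e
      simp only [mem_product, mem_powersetCard, subset_univ, true_and, Prod.mk.injEq] at h e
      exact hne ⟨I, J, h.1, h.2, e.1, e.2⟩
end
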